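/- arXiv:2410.18965 — 11 statements merged into one kernel-verified Lean document; each statement's English description precedes it below -/
import Mathlib

section
/- Suppose rank(X_0) = r = r_A (exact-parametrization) and 0 < η ≤ 1. Then for every t ≥ 0 the ScaledGD iterate satisfies X_t = Q Φ_t for some invertible matrix Φ_t ∈ R^{r×r} (in particular every column of X_t lies in the column space of A and X_tᵀX_t is invertible, so the iteration is well defined), and moreover the smallest eigenvalue of X_{t+1}X_{t+1}ᵀ satisfies σ_r(X_{t+1}X_{t+1}ᵀ) ≥ (1−η)^{2t+2} σ_r(X_0X_0ᵀ) + (1−η) σ_r(A) − (1−η)^{2t+3} σ_r(A). -/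
open Matrix BigOperators

/-- `kthEig M k` is the `k`-th largest eigenvalue of a real symmetric matrix `M`,
via the Courant–Fischer max-min characterization. -/
noncomputable def kthEig {n : ℕ} (M : Matrix (Fin n) (Fin n) ℝ) (k : ℕ) : ℝ :=
  sSup {c : ℝ | ∃ V : Submodule ℝ (Fin n → ℝ), Module.finrank ℝ V = k ∧
    ∀ x ∈ V, c * (∑ i, x i ^ 2) ≤ ∑ i, x i * (M *ᵥ x) i}


theorem aux_claim {m r : ℕ} (Q : Matrix (Fin m) (Fin r) ℝ) (hQ : Qᵀ * Q = 1)
    (S : Matrix (Fin r) (Fin r) ℝ) (hS : ∀ y, 0 ≤ y ⬝ᵥ (S *ᵥ y)) (c : ℝ)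
    (V : Submodule ℝ (Fin m → ℝ)) (hV : Module.finrank ℝ V = r)
    (h : ∀ x ∈ V, c * (∑ i, x i ^ 2) ≤ ∑ i, x i * ((Q * S * Qᵀ) *ᵥ x) i) (y : Fin r → ℝ) :
    c * (y ⬝ᵥ y) ≤ y ⬝ᵥ (S *ᵥ y) := by
  have hyy : ∀ {k : ℕ} (z : Fin k → ℝ), 0 ≤ z ⬝ᵥ z := fun z => by
    simpa using dotProduct_star_self_nonneg z
  have hq : ∀ x : Fin m → ℝ, ∑ i, x i * ((Q * S * Qᵀ) *ᵥ x) i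
      = (Qᵀ *ᵥ x) ⬝ᵥ (S *ᵥ (Qᵀ *ᵥ x)) := by
    intro x
    change x ⬝ᵥ _ = _
    rw [← mulVec_mulVec, ← mulVec_mulVec, dotProduct_mulVec, ← mulVec_transpose]
  have hs : ∀ x : Fin m → ℝ, ∑ i, x i ^ 2 = x ⬝ᵥ x := by
    intro x; simp [dotProduct, sq]
  rcases le_or_gt c 0 with hc | hc
  · exact le_trans (mul_nonpos_of_nonpos_of_nonneg hc (hyy y)) (hS y)
  · let f : V →ₗ[ℝ] (Fin r → ℝ) := (Matrix.mulVecLin Qᵀ).comp V.subtype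
    have hinj : Function.Injective f := by
      rw [injective_iff_map_eq_zero]
      intro x hx
      have hx' : Qᵀ *ᵥ (x : Fin m → ℝ) = 0 := hx
      have h1 := h x x.2
      rw [hq, hs, hx'] at h1
      simp only [zero_dotProduct] at h1
      have h2 := hyy (x : Fin m → ℝ)
      have h3 : (x : Fin m → ℝ) ⬝ᵥ (x : Fin m → ℝ) = 0 := by nlinarith
      exact Subtype.ext (dotProduct_self_eq_zero.1 h3)
    have hsurj : Function.Surjective f :=
      (LinearMap.injective_iff_surjective_of_finrank_eq_finrank (by simp [hV])).1 hinj
    obtain ⟨x, hx⟩ := hsurj y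
    have hx' : Qᵀ *ᵥ (x : Fin m → ℝ) = y := hx
    have h1 := h x x.2
    rw [hq, hs, hx'] at h1
    refine le_trans (mul_le_mul_of_nonneg_left ?_ hc.le) h1
    generalize (x : Fin m → ℝ) = x at hx'
    have h2 := hyy (x - Q *ᵥ y)
    have e1 : x ⬝ᵥ (Q *ᵥ y) = y ⬝ᵥ y := by
      rw [dotProduct_mulVec, ← mulVec_transpose, hx']
    have e2 : (Q *ᵥ y) ⬝ᵥ (Q *ᵥ y) = y ⬝ᵥ y := by
      rw [dotProduct_mulVec, ← mulVec_transpose, mulVec_mulVec, hQ, one_mulVec]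
    have e3 : (Q *ᵥ y) ⬝ᵥ x = y ⬝ᵥ y := by rw [dotProduct_comm, e1]
    rw [sub_dotProduct, dotProduct_sub, dotProduct_sub, e1, e2, e3] at h2
    linarith

theorem aux_mem {m r : ℕ} (Q : Matrix (Fin m) (Fin r) ℝ) (hQ : Qᵀ * Q = 1)
    (S : Matrix (Fin r) (Fin r) ℝ) (c : ℝ)
    (h : ∀ y, c * (y ⬝ᵥ y) ≤ y ⬝ᵥ (S *ᵥ y)) :
    ∃ V : Submodule ℝ (Fin m → ℝ), Module.finrank ℝ V = r ∧
    ∀ x ∈ V, c * (∑ i, x i ^ 2) ≤ ∑ i, x i * ((Q * S * Qᵀ) *ᵥ x) i := by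
  have hinj : Function.Injective (Matrix.mulVecLin Q) := by
    intro a b hab
    have h1 : Q *ᵥ a = Q *ᵥ b := hab
    have h2 := congrArg (fun z => Qᵀ *ᵥ z) h1
    simpa [mulVec_mulVec, hQ] using h2
  refine ⟨LinearMap.range (Matrix.mulVecLin Q), ?_, ?_⟩
  · rw [LinearMap.finrank_range_of_inj hinj]; simp
  · rintro _ ⟨y, rfl⟩
    have e2 : (Q *ᵥ y) ⬝ᵥ (Q *ᵥ y) = y ⬝ᵥ y := by
      rw [dotProduct_mulVec, ← mulVec_transpose, mulVec_mulVec, hQ, one_mulVec]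
    have e1 : ∑ i, (Q *ᵥ y) i ^ 2 = y ⬝ᵥ y := by
      rw [← e2]; simp [dotProduct, sq]
    have e3 : (Q *ᵥ y) ⬝ᵥ ((Q * S * Qᵀ) *ᵥ (Q *ᵥ y)) = y ⬝ᵥ (S *ᵥ y) := by
      rw [← mulVec_mulVec, ← mulVec_mulVec, dotProduct_mulVec, ← mulVec_transpose,
        mulVec_mulVec, mulVec_mulVec, hQ, one_mulVec, Matrix.mul_one]
    have h4 := h y
    rw [← e1, ← e3] at h4
    exact h4

theorem aux_le {m r : ℕ} (Q : Matrix (Fin m) (Fin r) ℝ) (hQ : Qᵀ * Q = 1)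
    (S : Matrix (Fin r) (Fin r) ℝ) (hS : ∀ y, 0 ≤ y ⬝ᵥ (S *ᵥ y)) (y : Fin r → ℝ) :
    kthEig (Q * S * Qᵀ) r * (y ⬝ᵥ y) ≤ y ⬝ᵥ (S *ᵥ y) := by
  by_cases hy : y = 0
  · simp [hy]
  · have h0 : 0 < y ⬝ᵥ y := by
      have := dotProduct_star_self_nonneg y
      have h2 : y ⬝ᵥ y ≠ 0 := fun h => hy (dotProduct_self_eq_zero.1 h)
      exact lt_of_le_of_ne (by simpa using this) h2.symm
    rw [← le_div_iff₀ h0]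
    refine csSup_le ⟨0, aux_mem Q hQ S 0 (by simpa using hS)⟩ ?_
    rintro c ⟨V, hV, h⟩
    rw [le_div_iff₀ h0]
    exact aux_claim Q hQ S hS c V hV h y

theorem aux_ge {m r : ℕ} (hr : 0 < r) (Q : Matrix (Fin m) (Fin r) ℝ) (hQ : Qᵀ * Q = 1)
    (S : Matrix (Fin r) (Fin r) ℝ) (hS : ∀ y, 0 ≤ y ⬝ᵥ (S *ᵥ y)) (c : ℝ)
    (h : ∀ y, c * (y ⬝ᵥ y) ≤ y ⬝ᵥ (S *ᵥ y)) :
    c ≤ kthEig (Q * S * Qᵀ) r := by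
  refine le_csSup ?_ (aux_mem Q hQ S c h)
  let y : Fin r → ℝ := Pi.single ⟨0, hr⟩ 1
  have hy : y ⬝ᵥ y = 1 := by simp [y]
  refine ⟨y ⬝ᵥ (S *ᵥ y), ?_⟩
  rintro c ⟨V, hV, h⟩
  have := aux_claim Q hQ S hS c V hV h y
  rwa [hy, mul_one] at this

theorem aux_step {r : ℕ} (F : Matrix (Fin r) (Fin r) ℝ) (d : Fin r → ℝ) (hF : IsUnit F)
    (η : ℝ) (y : Fin r → ℝ) (G : Matrix (Fin r) (Fin r) ℝ)
    (hG : G = (1 - η) • F + η • (diagonal d * (F⁻¹)ᵀ)) :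
    y ⬝ᵥ ((G * Gᵀ) *ᵥ y) = (1 - η) ^ 2 * (y ⬝ᵥ ((F * Fᵀ) *ᵥ y))
      + 2 * η * (1 - η) * (y ⬝ᵥ (diagonal d *ᵥ y))
      + η ^ 2 * ((F⁻¹ *ᵥ (diagonal d *ᵥ y)) ⬝ᵥ (F⁻¹ *ᵥ (diagonal d *ᵥ y))) := by
  have hdet := (Matrix.isUnit_iff_isUnit_det F).1 hF
  have hGy : Gᵀ *ᵥ y = (1 - η) • (Fᵀ *ᵥ y) + η • (F⁻¹ *ᵥ (diagonal d *ᵥ y)) := by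
    rw [hG, transpose_add, transpose_smul, transpose_smul, transpose_mul, transpose_transpose,
      diagonal_transpose, add_mulVec, smul_mulVec, smul_mulVec, mulVec_mulVec]
  have hq : ∀ H : Matrix (Fin r) (Fin r) ℝ,
      y ⬝ᵥ ((H * Hᵀ) *ᵥ y) = (Hᵀ *ᵥ y) ⬝ᵥ (Hᵀ *ᵥ y) := by
    intro H
    rw [← mulVec_mulVec, dotProduct_mulVec, ← mulVec_transpose]
  have hc : (Fᵀ *ᵥ y) ⬝ᵥ (F⁻¹ *ᵥ (diagonal d *ᵥ y)) = y ⬝ᵥ (diagonal d *ᵥ y) := by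
    rw [mulVec_transpose, ← dotProduct_mulVec, mulVec_mulVec, Matrix.mul_nonsing_inv _ hdet,
      one_mulVec]
  have hc2 : (F⁻¹ *ᵥ (diagonal d *ᵥ y)) ⬝ᵥ (Fᵀ *ᵥ y) = y ⬝ᵥ (diagonal d *ᵥ y) := by
    rw [dotProduct_comm, hc]
  rw [hq, hq, hGy]
  simp only [add_dotProduct, dotProduct_add, smul_dotProduct, dotProduct_smul, hc, hc2,
    smul_eq_mul]
  ring

/-- Implicit regularization of ScaledGD with Nyström initialization in the symmetric,
exact-parametrized setting: the iterates stay aligned with the column space of `A`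
(via an invertible `Φ_t`), the preconditioner is invertible, and the smallest (i.e. `r`-th
largest) eigenvalue of `X_{t+1} X_{t+1}ᵀ` satisfies the stated lower bound. -/
theorem stmt_0
    (m r : ℕ) (hr : 0 < r)
    (A : Matrix (Fin m) (Fin m) ℝ)
    (Q : Matrix (Fin m) (Fin r) ℝ) (d : Fin r → ℝ)
    (hQ : Qᵀ * Q = 1)
    (hd : ∀ i, 0 < d i)
    (hdmono : ∀ i j : Fin r, i ≤ j → d j ≤ d i)
    (hA : A = Q * Matrix.diagonal d * Qᵀ)
    (η : ℝ) (hη0 : 0 < η) (hη1 : η ≤ 1)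
    (Ω : Matrix (Fin m) (Fin r) ℝ)
    (X : ℕ → Matrix (Fin m) (Fin r) ℝ)
    (hX0 : X 0 = A * Ω)
    (hrank : (X 0).rank = r)
    (hrec : ∀ t : ℕ,
      X (t + 1) = X t - η • ((X t * (X t)ᵀ - A) * X t * ((X t)ᵀ * X t)⁻¹)) :
    (∀ t : ℕ, ∃ Φ : Matrix (Fin r) (Fin r) ℝ,
        IsUnit Φ ∧ X t = Q * Φ ∧ IsUnit ((X t)ᵀ * X t)) ∧
    (∀ t : ℕ,
      (1 - η) ^ (2 * t + 2) * kthEig (X 0 * (X 0)ᵀ) r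
          + (1 - η) * kthEig A r - (1 - η) ^ (2 * t + 3) * kthEig A r
        ≤ kthEig (X (t + 1) * (X (t + 1))ᵀ) r) := by
  have hyy : ∀ (z : Fin r → ℝ), 0 ≤ z ⬝ᵥ z := fun z => by
    simpa using dotProduct_star_self_nonneg z
  have hPS : ∀ (H : Matrix (Fin r) (Fin r) ℝ) (y : Fin r → ℝ),
      0 ≤ y ⬝ᵥ ((H * Hᵀ) *ᵥ y) := by
    intro H y
    rw [← mulVec_mulVec, dotProduct_mulVec, ← mulVec_transpose]
    exact hyy _
  have hDS : ∀ y : Fin r → ℝ, 0 ≤ y ⬝ᵥ (diagonal d *ᵥ y) := by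
    intro y
    simp only [dotProduct, mulVec_diagonal]
    refine Finset.sum_nonneg fun i _ => ?_
    nlinarith [hd i, mul_nonneg (hd i).le (sq_nonneg (y i))]
  have hXX : ∀ F : Matrix (Fin r) (Fin r) ℝ, (Q * F)ᵀ * (Q * F) = Fᵀ * F := by
    intro F
    rw [transpose_mul, Matrix.mul_assoc, ← Matrix.mul_assoc Qᵀ, hQ, Matrix.one_mul]
  have hXX2 : ∀ F : Matrix (Fin r) (Fin r) ℝ, (Q * F) * (Q * F)ᵀ = Q * (F * Fᵀ) * Qᵀ := by
    intro F
    rw [transpose_mul]; simp only [Matrix.mul_assoc]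
  have hunit : ∀ F : Matrix (Fin r) (Fin r) ℝ, IsUnit F → IsUnit ((Q * F)ᵀ * (Q * F)) := by
    intro F hF
    rw [hXX]
    exact ((Matrix.isUnit_transpose F).2 hF).mul hF
  have hbase : ∃ F : Matrix (Fin r) (Fin r) ℝ, IsUnit F ∧ X 0 = Q * F := by
    refine ⟨diagonal d * Qᵀ * Ω, ?_, ?_⟩
    · have h1 : X 0 = Q * (diagonal d * Qᵀ * Ω) := by
        rw [hX0, hA]; simp only [Matrix.mul_assoc]
      have h2 : r ≤ (diagonal d * Qᵀ * Ω).rank := by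
        have := Matrix.rank_mul_le_right Q (diagonal d * Qᵀ * Ω)
        rwa [← h1, hrank] at this
      have h3 : (diagonal d * Qᵀ * Ω).rank = r :=
        le_antisymm (by simpa using Matrix.rank_le_card_width (diagonal d * Qᵀ * Ω)) h2
      generalize diagonal d * Qᵀ * Ω = F at h3
      rw [← Matrix.mulVec_surjective_iff_isUnit]
      have h4 : LinearMap.range F.mulVecLin = ⊤ := by
        apply Submodule.eq_top_of_finrank_eq
        rw [Matrix.rank] at h3
        rw [h3]; simp
      exact LinearMap.range_eq_top.1 h4
    · rw [hX0, hA]; simp only [Matrix.mul_assoc]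
  have hnext : ∀ (t : ℕ) (F : Matrix (Fin r) (Fin r) ℝ), IsUnit F → X t = Q * F →
      ∃ G : Matrix (Fin r) (Fin r) ℝ, IsUnit G ∧ X (t + 1) = Q * G ∧
        G = (1 - η) • F + η • (diagonal d * (F⁻¹)ᵀ) := by
    intro t F hF hXt
    have hdet := (Matrix.isUnit_iff_isUnit_det F).1 hF
    refine ⟨_, ?_, ?_, rfl⟩
    · rw [← Matrix.isUnit_transpose, ← Matrix.mulVec_injective_iff_isUnit]
      generalize hG : (1 - η) • F + η • (diagonal d * (F⁻¹)ᵀ) = G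
      have key : ∀ y, Gᵀ *ᵥ y = 0 → y = 0 := by
        intro y hy
        have h1 := aux_step F d hF η y G hG.symm
        rw [← mulVec_mulVec, hy, mulVec_zero, dotProduct_zero] at h1
        have a1 := mul_nonneg (sq_nonneg (1 - η)) (hPS F y)
        have a2 := mul_nonneg (mul_nonneg (mul_nonneg zero_le_two hη0.le) (sub_nonneg.2 hη1)) (hDS y)
        have a3 := hyy (F⁻¹ *ᵥ (diagonal d *ᵥ y))
        have a4 : 0 < η ^ 2 := by positivity
        have a5 : (F⁻¹ *ᵥ (diagonal d *ᵥ y)) ⬝ᵥ (F⁻¹ *ᵥ (diagonal d *ᵥ y)) = 0 := by nlinarith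
        have a6 := dotProduct_self_eq_zero.1 a5
        have a7 := congrArg (fun z => F *ᵥ z) a6
        simp only [mulVec_mulVec, mulVec_zero] at a7
        rw [Matrix.mul_nonsing_inv_cancel_left _ _ hdet] at a7
        funext i
        have a8 := congrFun a7 i
        rw [mulVec_diagonal] at a8
        exact (mul_eq_zero.1 a8).resolve_left (hd i).ne'
      intro a b hab
      have : a - b = 0 := key _ (by rw [mulVec_sub]; exact sub_eq_zero.2 hab)
      exact sub_eq_zero.1 this
    · have hdetT : IsUnit (Fᵀ).det := by rwa [det_transpose]
      rw [hrec, hXt, hXX, hXX2, hA, Matrix.mul_inv_rev]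
      have e1 : (Q * (F * Fᵀ) * Qᵀ - Q * diagonal d * Qᵀ) * (Q * F) * (F⁻¹ * (Fᵀ)⁻¹)
          = Q * (F * Fᵀ - diagonal d) * (Qᵀ * Q) * (F * F⁻¹) * (Fᵀ)⁻¹ := by
        simp only [Matrix.mul_sub, Matrix.sub_mul, Matrix.mul_assoc]
      rw [e1, hQ, Matrix.mul_nonsing_inv _ hdet, Matrix.mul_one, Matrix.mul_one,
        Matrix.mul_assoc, Matrix.sub_mul, Matrix.mul_assoc F, Matrix.mul_nonsing_inv _ hdetT,
        Matrix.mul_one, ← Matrix.mul_smul, ← Matrix.mul_sub, transpose_nonsing_inv]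
      congr 1
      module
  have hall : ∀ t : ℕ, ∃ F : Matrix (Fin r) (Fin r) ℝ, IsUnit F ∧ X t = Q * F := by
    intro t
    induction t with
    | zero => exact hbase
    | succ t ih =>
      obtain ⟨F, hF, hXt⟩ := ih
      obtain ⟨G, hG, hXG, _⟩ := hnext t F hF hXt
      exact ⟨G, hG, hXG⟩
  refine ⟨fun t => ?_, fun t => ?_⟩
  · obtain ⟨F, hF, hXt⟩ := hall t
    exact ⟨F, hF, hXt, by rw [hXt]; exact hunit F hF⟩
  · have hs0 : 0 ≤ kthEig A r := by
      rw [hA]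
      exact aux_ge hr Q hQ _ hDS 0 (by simpa using hDS)
    have hsA : ∀ y, kthEig A r * (y ⬝ᵥ y) ≤ y ⬝ᵥ (diagonal d *ᵥ y) := by
      intro y
      have := aux_le Q hQ _ hDS y
      rwa [← hA] at this
    generalize kthEig A r = s at hs0 hsA
    have main : ∀ t : ℕ, ∃ F : Matrix (Fin r) (Fin r) ℝ, IsUnit F ∧ X t = Q * F ∧
        ∀ y, ((1 - η) ^ (2 * t) * kthEig (X 0 * (X 0)ᵀ) r + (1 - η) * s
          - (1 - η) ^ (2 * t + 1) * s) * (y ⬝ᵥ y) ≤ y ⬝ᵥ ((F * Fᵀ) *ᵥ y) := by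
      intro t
      induction t with
      | zero =>
        obtain ⟨F, hF, hX⟩ := hbase
        refine ⟨F, hF, hX, fun y => ?_⟩
        have := aux_le Q hQ _ (hPS F) y
        rw [← hXX2, ← hX] at this
        simpa using this
      | succ t ih =>
        obtain ⟨F, hF, hXt, hy⟩ := ih
        obtain ⟨G, hG, hXG, hGe⟩ := hnext t F hF hXt
        refine ⟨G, hG, hXG, fun y => ?_⟩
        rw [aux_step F d hF η y G hGe]
        have b1 := mul_le_mul_of_nonneg_left (hy y) (sq_nonneg (1 - η))
        have b2 := mul_le_mul_of_nonneg_left (hsA y)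
          (mul_nonneg (mul_nonneg zero_le_two hη0.le) (sub_nonneg.2 hη1))
        have b3 := mul_nonneg (sq_nonneg η) (hyy (F⁻¹ *ᵥ (diagonal d *ᵥ y)))
        have b4 : 0 ≤ η ^ 2 * (1 - η) * s * (y ⬝ᵥ y) :=
          mul_nonneg (mul_nonneg (mul_nonneg (sq_nonneg η) (sub_nonneg.2 hη1)) hs0) (hyy y)
        generalize kthEig (X 0 * (X 0)ᵀ) r = p at *
        have e1 : (1 - η) ^ (2 * (t + 1)) = (1 - η) ^ 2 * (1 - η) ^ (2 * t) := by ring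
        have e2 : (1 - η) ^ (2 * (t + 1) + 1) = (1 - η) ^ 2 * (1 - η) ^ (2 * t + 1) := by ring
        rw [e1, e2]
        linarith
    obtain ⟨F, hF, hXt, hy⟩ := main (t + 1)
    have := aux_ge hr Q hQ _ (hPS F) _ hy
    rw [← hXX2, ← hXt] at this
    exact this
end

section
/- Suppose rank(X_0) = r = r_A (exact-parametrization), 0 < η ≤ 2/3, and let κ = σ_1(A)/σ_r(A). If at iteration t the smallest eigenvalue satisfies σ_r(X_tX_tᵀ) ≥ σ_r(A)/3, then the next ScaledGD iterate satisfies ‖X_{t+1}X_{t+1}ᵀ − A‖_F ≤ (1 − η) ‖X_tX_tᵀ − A‖_F + η² ‖A‖_F + 3 η² κ ‖A‖_F. -/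
open Matrix BigOperators

/-- The Frobenius norm of a real matrix. -/
noncomputable def frobNorm {m n : ℕ} (M : Matrix (Fin m) (Fin n) ℝ) : ℝ :=
  Real.sqrt (∑ i, ∑ j, (M i j) ^ 2)

lemma dot_sq {n : ℕ} (x : Fin n → ℝ) : ∑ i, x i ^ 2 = x ⬝ᵥ x := by
  simp [dotProduct, sq]

lemma dot_nonneg' {n : ℕ} (x : Fin n → ℝ) : 0 ≤ x ⬝ᵥ x := by
  rw [← dot_sq]; positivity

lemma quad_bound {n : ℕ} (M : Matrix (Fin n) (Fin n) ℝ) (x : Fin n → ℝ) :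
    ∑ i, x i * (M *ᵥ x) i ≤ (∑ i, ∑ j, |M i j|) * ∑ i, x i ^ 2 := by
  rw [Finset.sum_mul]
  refine Finset.sum_le_sum fun i _ => ?_
  rw [Finset.sum_mul, mulVec, dotProduct, Finset.mul_sum]
  refine Finset.sum_le_sum fun j _ => ?_
  have h1 : x i ^ 2 ≤ ∑ i, x i ^ 2 :=
    Finset.single_le_sum (f := fun i => x i ^ 2) (fun _ _ => sq_nonneg _) (Finset.mem_univ i)
  have h2 : x j ^ 2 ≤ ∑ i, x i ^ 2 :=
    Finset.single_le_sum (f := fun i => x i ^ 2) (fun _ _ => sq_nonneg _) (Finset.mem_univ j)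
  have h3 : |x i * x j| ≤ ∑ i, x i ^ 2 := by
    rw [abs_le]
    constructor <;> nlinarith [sq_nonneg (x i - x j), sq_nonneg (x i + x j)]
  calc x i * (M i j * x j) = M i j * (x i * x j) := by ring
    _ ≤ |M i j * (x i * x j)| := le_abs_self _
    _ = |M i j| * |x i * x j| := abs_mul _ _
    _ ≤ _ := mul_le_mul_of_nonneg_left h3 (abs_nonneg _)

lemma le_kthEig {n : ℕ} (M : Matrix (Fin n) (Fin n) ℝ) (k : ℕ) (hk : 0 < k) (c : ℝ)
    (V : Submodule ℝ (Fin n → ℝ)) (hV : Module.finrank ℝ V = k)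
    (h : ∀ x ∈ V, c * (∑ i, x i ^ 2) ≤ ∑ i, x i * (M *ᵥ x) i) : c ≤ kthEig M k := by
  refine le_csSup ⟨∑ i, ∑ j, |M i j|, ?_⟩ ⟨V, hV, h⟩
  rintro c ⟨V, hV, h⟩
  have : V ≠ ⊥ := by
    rintro rfl
    simp at hV
    omega
  obtain ⟨x, hx, hx0⟩ := Submodule.exists_mem_ne_zero_of_ne_bot this
  have h1 := (h x hx).trans (quad_bound M x)
  have : 0 < ∑ i, x i ^ 2 := by
    rw [dot_sq]
    exact lt_of_le_of_ne (dot_nonneg' x) (fun h => hx0 (dotProduct_self_eq_zero.1 h.symm))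
  exact le_of_mul_le_mul_right h1 this

lemma quad_conj {m r : ℕ} (Q : Matrix (Fin m) (Fin r) ℝ) (P : Matrix (Fin r) (Fin r) ℝ)
    (x : Fin m → ℝ) :
    ∑ i, x i * ((Q * P * Qᵀ) *ᵥ x) i = (Qᵀ *ᵥ x) ⬝ᵥ (P *ᵥ (Qᵀ *ᵥ x)) := by
  change x ⬝ᵥ _ = _
  rw [← mulVec_mulVec, ← mulVec_mulVec, dotProduct_mulVec, ← mulVec_transpose]

lemma contract {m r : ℕ} (Q : Matrix (Fin m) (Fin r) ℝ) (hQ : Qᵀ * Q = 1) (x : Fin m → ℝ) :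
    (Qᵀ *ᵥ x) ⬝ᵥ (Qᵀ *ᵥ x) ≤ x ⬝ᵥ x := by
  have h := dot_nonneg' (x - Q *ᵥ (Qᵀ *ᵥ x))
  have h1 : x ⬝ᵥ (Q *ᵥ (Qᵀ *ᵥ x)) = (Qᵀ *ᵥ x) ⬝ᵥ (Qᵀ *ᵥ x) := by
    rw [dotProduct_mulVec, ← mulVec_transpose]
  have h2 : (Q *ᵥ (Qᵀ *ᵥ x)) ⬝ᵥ (Q *ᵥ (Qᵀ *ᵥ x)) = (Qᵀ *ᵥ x) ⬝ᵥ (Qᵀ *ᵥ x) := by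
    rw [dotProduct_mulVec, ← mulVec_transpose, mulVec_mulVec _ Qᵀ Q, hQ, one_mulVec]
  rw [sub_dotProduct, dotProduct_sub, dotProduct_sub, h2, dotProduct_comm (Q *ᵥ (Qᵀ *ᵥ x)) x, h1] at h
  linarith

lemma kthEig_quad {m r : ℕ} (Q : Matrix (Fin m) (Fin r) ℝ) (hQ : Qᵀ * Q = 1)
    (P : Matrix (Fin r) (Fin r) ℝ) (s : ℝ) (hs : 0 < s)
    (h : s ≤ kthEig (Q * P * Qᵀ) r) (y : Fin r → ℝ) : s * (y ⬝ᵥ y) ≤ y ⬝ᵥ (P *ᵥ y) := by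
  have hne : {c : ℝ | ∃ V : Submodule ℝ (Fin m → ℝ), Module.finrank ℝ V = r ∧
    ∀ x ∈ V, c * (∑ i, x i ^ 2) ≤ ∑ i, x i * ((Q * P * Qᵀ) *ᵥ x) i}.Nonempty := by
    by_contra hc
    rw [Set.not_nonempty_iff_eq_empty] at hc
    rw [kthEig, hc, Real.sSup_empty] at h
    linarith
  have key : ∀ c, 0 < c → c < s → c * (y ⬝ᵥ y) ≤ y ⬝ᵥ (P *ᵥ y) := by
    intro c0 hc0 hcs
    obtain ⟨c, ⟨V, hV, hq⟩, hc⟩ := exists_lt_of_lt_csSup hne (lt_of_lt_of_le hcs h)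
    have hcpos : 0 < c := hc0.trans hc
    let f : V →ₗ[ℝ] (Fin r → ℝ) := (Matrix.mulVecLin Qᵀ).domRestrict V
    have hf : Function.Injective f := by
      rw [← LinearMap.ker_eq_bot, LinearMap.ker_eq_bot']
      rintro ⟨x, hx⟩ hfx
      have hfx' : Qᵀ *ᵥ x = 0 := hfx
      have := hq x hx
      rw [quad_conj, hfx', dot_sq] at this
      simp at this
      have h0 : x ⬝ᵥ x = 0 := by
        nlinarith [dot_nonneg' x]
      simpa using dotProduct_self_eq_zero.1 h0
    have hsurj : Function.Surjective f :=
      (LinearMap.injective_iff_surjective_of_finrank_eq_finrank (by simp [hV])).1 hf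
    obtain ⟨⟨x, hx⟩, hxy⟩ := hsurj y
    have hxy' : Qᵀ *ᵥ x = y := hxy
    have h1 := hq x hx
    have h2 := contract Q hQ x
    rw [quad_conj, hxy', dot_sq] at h1
    rw [hxy'] at h2
    nlinarith [dot_nonneg' y]
  by_contra hcon
  push Not at hcon
  have hy : 0 ≤ y ⬝ᵥ y := dot_nonneg' y
  rcases hy.eq_or_lt with hy | hy
  · have := key (s/2) (by linarith) (by linarith)
    rw [← hy] at this hcon
    linarith
  · have hb : (y ⬝ᵥ (P *ᵥ y)) / (y ⬝ᵥ y) < s := by rwa [div_lt_iff₀ hy]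
    obtain ⟨c, hc1, hc2⟩ := exists_between (max_lt hb hs)
    have := key c (lt_of_le_of_lt (le_max_right _ _) hc1) hc2
    have h3 := lt_of_le_of_lt (le_max_left _ _) hc1
    rw [div_lt_iff₀ hy] at h3
    linarith

section
attribute [local instance] Matrix.frobeniusNormedAddCommGroup Matrix.frobeniusNormedSpace

lemma frob_eq {m n : ℕ} (M : Matrix (Fin m) (Fin n) ℝ) : frobNorm M = ‖M‖ := by
  rw [Matrix.frobenius_norm_def, frobNorm, Real.sqrt_eq_rpow]
  simp

lemma frob_add {m n : ℕ} (M N : Matrix (Fin m) (Fin n) ℝ) :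
    frobNorm (M + N) ≤ frobNorm M + frobNorm N := by
  simp only [frob_eq]; exact norm_add_le _ _

lemma frob_smul {m n : ℕ} (c : ℝ) (M : Matrix (Fin m) (Fin n) ℝ) :
    frobNorm (c • M) = |c| * frobNorm M := by
  simp only [frob_eq]; rw [norm_smul, Real.norm_eq_abs]
end

lemma frob_trace {m n : ℕ} (M : Matrix (Fin m) (Fin n) ℝ) :
    frobNorm M = Real.sqrt (Mᵀ * M).trace := by
  rw [frobNorm, Finset.sum_comm]
  simp [trace, Matrix.mul_apply, sq]

lemma frob_conj {m r : ℕ} (Q : Matrix (Fin m) (Fin r) ℝ) (hQ : Qᵀ * Q = 1)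
    (M : Matrix (Fin r) (Fin r) ℝ) : frobNorm (Q * M * Qᵀ) = frobNorm M := by
  rw [frob_trace, frob_trace]
  have : (Q * M * Qᵀ)ᵀ * (Q * M * Qᵀ) = Q * (Mᵀ * M * Qᵀ) := by
    simp only [transpose_mul, transpose_transpose, Matrix.mul_assoc]
    rw [← Matrix.mul_assoc Qᵀ Q, hQ, Matrix.one_mul]
  rw [this, trace_mul_comm, Matrix.mul_assoc, hQ, Matrix.mul_one]

lemma frob_le {m n : ℕ} (M N : Matrix (Fin m) (Fin n) ℝ) (c : ℝ) (hc : 0 ≤ c)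
    (h : ∑ i, ∑ j, M i j ^ 2 ≤ c ^ 2 * ∑ i, ∑ j, N i j ^ 2) : frobNorm M ≤ c * frobNorm N := by
  rw [frobNorm, frobNorm]
  refine (Real.sqrt_le_sqrt h).trans ?_
  rw [Real.sqrt_mul (sq_nonneg c), Real.sqrt_sq hc]

lemma frob_diag {r : ℕ} (d : Fin r → ℝ) (b : ℝ) (hd : ∀ i, 0 ≤ d i ∧ d i ≤ b) (hb : 0 ≤ b)
    (M : Matrix (Fin r) (Fin r) ℝ) : frobNorm (diagonal d * M) ≤ b * frobNorm M := by
  refine frob_le _ _ _ hb ?_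
  rw [Finset.mul_sum]
  refine Finset.sum_le_sum fun i _ => ?_
  rw [Finset.mul_sum]
  refine Finset.sum_le_sum fun j _ => ?_
  rw [diagonal_mul, mul_pow]
  have := hd i
  gcongr
  · exact this.1
  · exact this.2

lemma frob_inv {r : ℕ} (P Y N : Matrix (Fin r) (Fin r) ℝ) (s : ℝ) (hs : 0 < s)
    (hP : ∀ y : Fin r → ℝ, s * (y ⬝ᵥ y) ≤ y ⬝ᵥ (P *ᵥ y)) (hY : P * Y = N) :
    frobNorm Y ≤ s⁻¹ * frobNorm N := by
  refine frob_le _ _ _ (by positivity) ?_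
  rw [Finset.sum_comm, Finset.sum_comm (f := fun i j => N i j ^ 2), Finset.mul_sum]
  refine Finset.sum_le_sum fun j _ => ?_
  let w : Fin r → ℝ := fun i => Y i j
  let v : Fin r → ℝ := fun i => N i j
  have hv : P *ᵥ w = v := by
    ext i
    simp only [w, v, ← hY, mulVec, dotProduct, Matrix.mul_apply]
  change ∑ i, w i ^ 2 ≤ _ * ∑ i, v i ^ 2
  rw [dot_sq, dot_sq]
  have h1 := hP w
  rw [hv] at h1
  have h2 := dot_nonneg' (s • w - v)
  simp only [sub_dotProduct, dotProduct_sub, smul_dotProduct, dotProduct_smul, smul_eq_mul,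
    dotProduct_comm v w] at h2
  have h3 : s ^ 2 * (w ⬝ᵥ w) ≤ v ⬝ᵥ v := by nlinarith
  rw [inv_pow, ← div_eq_inv_mul, le_div_iff₀ (by positivity)]
  linarith

/-- One-step linear contraction (Phase 1) for ScaledGD with Nyström initialization in the
symmetric exact-parametrized setting: if `σ_r(X_t X_tᵀ) ≥ σ_r(A)/3` then
`‖X_{t+1}X_{t+1}ᵀ − A‖_F ≤ (1−η)‖X_tX_tᵀ − A‖_F + η²‖A‖_F + 3η²κ‖A‖_F`,
where `κ = σ_1(A)/σ_r(A)`. -/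
theorem stmt_1
    (m r : ℕ) (hr : 0 < r)
    (A : Matrix (Fin m) (Fin m) ℝ)
    (Q : Matrix (Fin m) (Fin r) ℝ) (d : Fin r → ℝ)
    (hQ : Qᵀ * Q = 1)
    (hd : ∀ i, 0 < d i)
    (hdmono : ∀ i j : Fin r, i ≤ j → d j ≤ d i)
    (hA : A = Q * Matrix.diagonal d * Qᵀ)
    (η : ℝ) (hη0 : 0 < η) (hη1 : η ≤ 2 / 3)
    (κ : ℝ) (hκ : κ = kthEig A 1 / kthEig A r)
    (Ω : Matrix (Fin m) (Fin r) ℝ)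
    (X : ℕ → Matrix (Fin m) (Fin r) ℝ)
    (hX0 : X 0 = A * Ω)
    (hrank : (X 0).rank = r)
    (hrec : ∀ s : ℕ,
      X (s + 1) = X s - η • ((X s * (X s)ᵀ - A) * X s * ((X s)ᵀ * X s)⁻¹))
    (t : ℕ)
    (hlow : kthEig A r / 3 ≤ kthEig (X t * (X t)ᵀ) r) :
    frobNorm (X (t + 1) * (X (t + 1))ᵀ - A)
      ≤ (1 - η) * frobNorm (X t * (X t)ᵀ - A)
          + η ^ 2 * frobNorm A + 3 * η ^ 2 * κ * frobNorm A := by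
  classical
  set D := Matrix.diagonal d with hD
  have hAZ : ∀ s, ∃ Z : Matrix (Fin r) (Fin r) ℝ, X s = Q * Z := by
    intro s
    induction s with
    | zero => exact ⟨D * Qᵀ * Ω, by rw [hX0, hA]; simp only [Matrix.mul_assoc]⟩
    | succ s ih =>
      obtain ⟨Z, hZ⟩ := ih
      refine ⟨Z - η • ((Z * (X s)ᵀ - D * Qᵀ) * X s * ((X s)ᵀ * X s)⁻¹), ?_⟩
      rw [hrec, Matrix.mul_sub, Matrix.mul_smul, ← Matrix.mul_assoc, ← Matrix.mul_assoc,
        Matrix.mul_sub, ← Matrix.mul_assoc, ← Matrix.mul_assoc, ← hZ, ← hA]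
  obtain ⟨Z, hZ⟩ := hAZ t
  let i0 : Fin r := ⟨0, hr⟩
  let il : Fin r := ⟨r - 1, by omega⟩
  have hd0 : ∀ i, d i ≤ d i0 := fun i => hdmono _ _ (Fin.mk_le_of_le_val (Nat.zero_le _))
  have hdl : ∀ i, d il ≤ d i := fun i => hdmono _ _ (by
    rw [Fin.le_def]; have := i.2; simp only [il]; omega)
  have hQinj : Function.Injective (Matrix.mulVecLin Q) := by
    intro x y hxy
    have : Qᵀ *ᵥ (Q *ᵥ x) = Qᵀ *ᵥ (Q *ᵥ y) := congrArg _ hxy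
    simpa [mulVec_mulVec, hQ] using this
  have hQn : ∀ y : Fin r → ℝ, (Q *ᵥ y) ⬝ᵥ (Q *ᵥ y) = y ⬝ᵥ y := by
    intro y
    rw [dotProduct_mulVec, ← mulVec_transpose, mulVec_mulVec, hQ, one_mulVec]
  have hQt : ∀ y : Fin r → ℝ, Qᵀ *ᵥ (Q *ᵥ y) = y := by
    intro y; rw [mulVec_mulVec, hQ, one_mulVec]
  have h1 : d i0 ≤ kthEig A 1 := by
    refine le_kthEig A 1 one_pos _ (Submodule.span ℝ {Q *ᵥ Pi.single i0 1}) ?_ ?_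
    · apply finrank_span_singleton
      intro h
      have := hQt (Pi.single i0 1)
      rw [h, mulVec_zero] at this
      have := congrFun this i0
      simp at this
    · intro x hx
      obtain ⟨a, rfl⟩ := Submodule.mem_span_singleton.1 hx
      rw [hA, quad_conj, dot_sq, ← mulVec_smul, hQn, hQt]
      apply le_of_eq
      simp [hD, mulVec_diagonal]
      ring
  have hσ : 0 < kthEig A r := by
    refine lt_of_lt_of_le (hd il) (le_kthEig A r hr _ (LinearMap.range (Matrix.mulVecLin Q)) ?_ ?_)
    · rw [LinearMap.finrank_range_of_inj hQinj]; simp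
    · rintro _ ⟨y, rfl⟩
      rw [mulVecLin_apply, hA, quad_conj, dot_sq, hQn, hQt, dotProduct, dotProduct, Finset.mul_sum]
      refine Finset.sum_le_sum fun i _ => ?_
      rw [hD, mulVec_diagonal]
      nlinarith [hdl i, mul_self_nonneg (y i)]
  set s := kthEig A r / 3 with hs
  have hspos : 0 < s := by positivity
  set P := Z * Zᵀ with hPdef
  have hXX : X t * (X t)ᵀ = Q * P * Qᵀ := by
    rw [hZ, transpose_mul, hPdef]; simp only [Matrix.mul_assoc]
  have hP := kthEig_quad Q hQ P s hspos (by rw [← hXX]; exact hlow)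
  have hPu : IsUnit P := by
    rw [← Matrix.mulVec_injective_iff_isUnit]
    refine (injective_iff_map_eq_zero (Matrix.mulVecLin P)).2 ?_
    intro y hy
    have hy' : P *ᵥ y = 0 := hy
    have := hP y
    rw [hy', dotProduct_zero] at this
    have h0 : y ⬝ᵥ y = 0 := by nlinarith [dot_nonneg' y]
    exact dotProduct_self_eq_zero.1 h0
  have hZu : IsUnit Z.det := by
    have := (Matrix.isUnit_iff_isUnit_det _).1 hPu
    rw [hPdef, det_mul] at this
    exact isUnit_of_mul_isUnit_left this
  have hZtu : IsUnit (Zᵀ).det := by rwa [det_transpose]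
  have hXtX : (X t)ᵀ * X t = Zᵀ * Z := by
    rw [hZ, transpose_mul, Matrix.mul_assoc, ← Matrix.mul_assoc Qᵀ, hQ, Matrix.one_mul]
  have hZZ : Z * (Zᵀ * Z)⁻¹ = (Zᵀ)⁻¹ := by
    rw [Matrix.mul_inv_rev, ← Matrix.mul_assoc, Matrix.mul_nonsing_inv _ hZu, Matrix.one_mul]
  have hstep : X (t+1) = Q * ((1 - η) • Z + η • (D * (Zᵀ)⁻¹)) := by
    have e1 : X t * ((X t)ᵀ * X t)⁻¹ = Q * (Zᵀ)⁻¹ := by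
      rw [hXtX, hZ, Matrix.mul_assoc, hZZ]
    have e2 : (X t * (X t)ᵀ - A) * X t * ((X t)ᵀ * X t)⁻¹ = Q * (Z - D * (Zᵀ)⁻¹) := by
      rw [Matrix.mul_assoc, e1, hXX, hA, Matrix.sub_mul, Matrix.mul_sub]
      simp only [Matrix.mul_assoc]
      rw [← Matrix.mul_assoc Qᵀ Q, hQ, Matrix.one_mul, hPdef, Matrix.mul_assoc Z,
        Matrix.mul_nonsing_inv _ hZtu, Matrix.mul_one]
    rw [hrec, e2, hZ, ← Matrix.mul_smul, ← Matrix.mul_sub]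
    congr 1
    module
  have hDt : Dᵀ = D := diagonal_transpose d
  set W := (Zᵀ)⁻¹ * Z⁻¹ with hW
  have hPW : P * W = 1 := by
    rw [hPdef, hW, Matrix.mul_assoc, ← Matrix.mul_assoc Zᵀ, Matrix.mul_nonsing_inv _ hZtu,
      Matrix.one_mul, Matrix.mul_nonsing_inv _ hZu]
  have hnext : X (t+1) * (X (t+1))ᵀ - A
      = Q * (((1 - η)^2 • (P - D) + (-η^2) • D) + η^2 • (D * (W * D))) * Qᵀ := by
    have e : ((1 - η) • Z + η • (D * (Zᵀ)⁻¹)) * ((1 - η) • Z + η • (D * (Zᵀ)⁻¹))ᵀ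
        = (1-η)^2 • P + (2 * η * (1 - η)) • D + η^2 • (D * (W * D)) := by
      have f1 : Z * (Z⁻¹ * D) = D := by
        rw [← Matrix.mul_assoc, Matrix.mul_nonsing_inv _ hZu, Matrix.one_mul]
      have f2 : D * ((Zᵀ)⁻¹ * Zᵀ) = D := by
        rw [Matrix.nonsing_inv_mul _ hZtu, Matrix.mul_one]
      have f3 : ((Zᵀ)⁻¹)ᵀ = Z⁻¹ := by rw [transpose_nonsing_inv, transpose_transpose]
      simp only [transpose_add, transpose_smul, transpose_mul, hDt, f3, Matrix.add_mul,
        Matrix.mul_add, Matrix.smul_mul, Matrix.mul_smul, Matrix.mul_assoc, f1, f2, hW, ← hPdef]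
      module
    have e' : X (t+1) * (X (t+1))ᵀ = Q * ((1-η)^2 • P + (2 * η * (1 - η)) • D
        + η^2 • (D * (W * D))) * Qᵀ := by
      rw [← e, hstep, transpose_mul]; simp only [Matrix.mul_assoc]
    rw [e', hA, ← Matrix.sub_mul, ← Matrix.mul_sub]
    congr 2
    module
  have hcur : X t * (X t)ᵀ - A = Q * (P - D) * Qᵀ := by
    rw [hXX, hA, ← Matrix.sub_mul, ← Matrix.mul_sub]
  have hAf : frobNorm A = frobNorm D := by rw [hA, frob_conj Q hQ]
  rw [hnext, hcur, hAf, frob_conj Q hQ, frob_conj Q hQ]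
  have hnn : ∀ M : Matrix (Fin r) (Fin r) ℝ, 0 ≤ frobNorm M := fun M => Real.sqrt_nonneg _
  have g1 := frob_add ((1 - η)^2 • (P - D) + (-η^2) • D) (η^2 • (D * (W * D)))
  have g2 := frob_add ((1 - η)^2 • (P - D)) ((-η^2) • D)
  rw [frob_smul, abs_of_nonneg (sq_nonneg η)] at g1
  rw [frob_smul, frob_smul, abs_of_nonneg (sq_nonneg _), abs_neg, abs_of_nonneg (sq_nonneg η)] at g2
  have g3 : frobNorm (D * (W * D)) ≤ d i0 * frobNorm (W * D) :=
    frob_diag d (d i0) (fun i => ⟨(hd i).le, hd0 i⟩) (hd i0).le _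
  have g4 : frobNorm (W * D) ≤ s⁻¹ * frobNorm D :=
    frob_inv P _ _ s hspos hP (by rw [← Matrix.mul_assoc, hPW, Matrix.one_mul])
  have g5 : frobNorm (D * (W * D)) ≤ 3 * κ * frobNorm D := by
    calc _ ≤ d i0 * frobNorm (W * D) := g3
      _ ≤ kthEig A 1 * (s⁻¹ * frobNorm D) := mul_le_mul h1 g4 (hnn _) ((hd i0).le.trans h1)
      _ = _ := by rw [hκ, hs]; field_simp
  have g6 : (1 - η)^2 * frobNorm (P - D) ≤ (1 - η) * frobNorm (P - D) :=
    mul_le_mul_of_nonneg_right (by nlinarith) (hnn _)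
  have g7 := mul_le_mul_of_nonneg_left g5 (sq_nonneg η)
  linarith
end

section
/- Let Σ ∈ R^{r×r} be diagonal with positive diagonal entries σ_1 ≥ ⋯ ≥ σ_r > 0, and let B ∈ R^{r×r} be symmetric positive definite with smallest eigenvalue λ_min(B) ≥ σ_r/3. Define B' = (1/4) B + (1/2) Σ + (1/4) Σ B⁻¹ Σ (one ScaledGD step with η = 1/2 in the reduced coordinates). Then ‖B' − Σ‖_F ≤ (3 σ_1 / (4 σ_r²)) ‖B − Σ‖_F². -/
open Matrix BigOperators

/-- The smallest eigenvalue of a real symmetric matrix, via the Rayleigh quotient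
characterization. -/
noncomputable def lamMin {n : ℕ} (M : Matrix (Fin n) (Fin n) ℝ) : ℝ :=
  sSup {c : ℝ | ∀ x : Fin n → ℝ, c * (∑ i, x i ^ 2) ≤ ∑ i, x i * (M *ᵥ x) i}

lemma frob_mul_sq {n : ℕ} (E F : Matrix (Fin n) (Fin n) ℝ) :
    ∑ i, ∑ j, ((E * F) i j) ^ 2 ≤ (∑ i, ∑ j, (E i j) ^ 2) * (∑ i, ∑ j, (F i j) ^ 2) := by
  rw [Finset.sum_comm (f := fun i j => (F i j) ^ 2), Finset.sum_mul_sum]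
  refine Finset.sum_le_sum fun i _ => Finset.sum_le_sum fun j _ => ?_
  rw [Matrix.mul_apply]
  exact Finset.sum_mul_sq_le_sq_mul_sq _ _ _

lemma quad_of_lamMin {n : ℕ} (M : Matrix (Fin n) (Fin n) ℝ) (a : ℝ) (ha : 0 < a)
    (h : a ≤ lamMin M) (x : Fin n → ℝ) : a * (∑ i, x i ^ 2) ≤ ∑ i, x i * (M *ᵥ x) i := by
  unfold lamMin at h
  set S := {c : ℝ | ∀ x : Fin n → ℝ, c * (∑ i, x i ^ 2) ≤ ∑ i, x i * (M *ᵥ x) i} with hS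
  have hne : S.Nonempty := by
    by_contra hn
    rw [Set.not_nonempty_iff_eq_empty] at hn
    rw [hn, Real.sSup_empty] at h
    linarith
  have h0 : 0 ≤ ∑ i, x i ^ 2 := Finset.sum_nonneg fun i _ => sq_nonneg _
  rcases h0.eq_or_lt with h0 | h0
  · obtain ⟨c, hc⟩ := hne
    have := hc x
    rw [← h0] at this ⊢
    simpa using this
  · rw [← le_div_iff₀ h0]
    refine h.trans (csSup_le hne fun c hc => ?_)
    rw [le_div_iff₀ h0]
    exact hc x

lemma inv_bound {n : ℕ} (M C : Matrix (Fin n) (Fin n) ℝ) (a : ℝ) (ha : 0 < a)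
    (hMC : M * C = 1)
    (h : ∀ x : Fin n → ℝ, a * (∑ i, x i ^ 2) ≤ ∑ i, x i * (M *ᵥ x) i) (x : Fin n → ℝ) :
    a ^ 2 * ∑ i, (C *ᵥ x) i ^ 2 ≤ ∑ i, x i ^ 2 := by
  have h1 := h (C *ᵥ x)
  rw [Matrix.mulVec_mulVec, hMC, Matrix.one_mulVec] at h1
  have h2 : 0 ≤ ∑ i, (x i - a * (C *ᵥ x) i) ^ 2 := Finset.sum_nonneg fun i _ => sq_nonneg _
  have h3 : ∑ i, (x i - a * (C *ᵥ x) i) ^ 2 = ∑ i, x i ^ 2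
      - 2 * a * ∑ i, (C *ᵥ x) i * x i + a ^ 2 * ∑ i, (C *ᵥ x) i ^ 2 := by
    rw [Finset.mul_sum, Finset.mul_sum, ← Finset.sum_sub_distrib, ← Finset.sum_add_distrib]
    exact Finset.sum_congr rfl fun i _ => by ring
  have h4 := Finset.sum_mul_sq_le_sq_mul_sq Finset.univ (C *ᵥ x) x
  have hY : 0 ≤ ∑ i, (C *ᵥ x) i ^ 2 := Finset.sum_nonneg fun i _ => sq_nonneg _
  rcases hY.eq_or_lt with hY | hY
  · rw [← hY, mul_zero]
    exact Finset.sum_nonneg fun i _ => sq_nonneg _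
  · have h5 : (a * ∑ i, (C *ᵥ x) i ^ 2) ^ 2 ≤ (∑ i, (C *ᵥ x) i * x i) ^ 2 :=
      pow_le_pow_left₀ (by positivity) h1 2
    refine le_of_mul_le_mul_left ?_ hY
    nlinarith

/-- One-step quadratic contraction underlying Phase 2 of ScaledGD (step size `η = 1/2`)
in reduced coordinates: for `Σ = diag(σ_1 ≥ ⋯ ≥ σ_r > 0)` and a symmetric positive
definite `B` with `λ_min(B) ≥ σ_r/3`, the matrix `B' = (1/4)B + (1/2)Σ + (1/4)ΣB⁻¹Σ`
satisfies `‖B' − Σ‖_F ≤ (3σ_1/(4σ_r²)) ‖B − Σ‖_F²`. -/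
theorem stmt_2
    (r : ℕ) (hr : 0 < r)
    (d : Fin r → ℝ)
    (hd : ∀ i, 0 < d i)
    (hdmono : ∀ i j : Fin r, i ≤ j → d j ≤ d i)
    (B : Matrix (Fin r) (Fin r) ℝ)
    (hB : B.PosDef)
    (hlam : d ⟨r - 1, Nat.sub_lt hr Nat.one_pos⟩ / 3 ≤ lamMin B)
    (B' : Matrix (Fin r) (Fin r) ℝ)
    (hB' : B' = (1 / 4 : ℝ) • B + (1 / 2 : ℝ) • Matrix.diagonal d
        + (1 / 4 : ℝ) • (Matrix.diagonal d * B⁻¹ * Matrix.diagonal d)) :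
    frobNorm (B' - Matrix.diagonal d)
      ≤ 3 * d ⟨0, hr⟩ / (4 * d ⟨r - 1, Nat.sub_lt hr Nat.one_pos⟩ ^ 2)
          * frobNorm (B - Matrix.diagonal d) ^ 2 := by
  set s := d ⟨r - 1, Nat.sub_lt hr Nat.one_pos⟩ with hs
  have hs0 : 0 < s := hd _
  have hs1 : s ≤ d ⟨0, hr⟩ := hdmono _ _ (Fin.mk_le_mk.2 (Nat.zero_le _))
  have hq := quad_of_lamMin B (s / 3) (by positivity) hlam
  have hu : IsUnit B.det := (Matrix.isUnit_iff_isUnit_det _).1 hB.isUnit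
  have hBC : B * B⁻¹ = 1 := Matrix.mul_nonsing_inv _ hu
  have hCB : B⁻¹ * B = 1 := Matrix.nonsing_inv_mul _ hu
  set C := B⁻¹ with hC
  set D := Matrix.diagonal d with hD
  have key : B' - D = (1 / 4 : ℝ) • ((B - D) * (C * (B - D))) := by
    have : (B - D) * (C * (B - D)) = B - (2 : ℝ) • D + D * C * D := by
      rw [Matrix.mul_sub, hCB, Matrix.sub_mul, Matrix.mul_sub, Matrix.mul_sub, mul_one, mul_one,
        ← Matrix.mul_assoc, hBC, one_mul, ← Matrix.mul_assoc, two_smul]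
      abel
    rw [this, hB']
    module
  set E := B - D with hE
  have hCE : (s / 3) ^ 2 * ∑ i, ∑ j, ((C * E) i j) ^ 2 ≤ ∑ i, ∑ j, (E i j) ^ 2 := by
    rw [Finset.sum_comm, Finset.sum_comm (f := fun i j => (E i j) ^ 2), Finset.mul_sum]
    refine Finset.sum_le_sum fun j _ => ?_
    exact inv_bound B C (s / 3) (by positivity) hBC hq (fun i => E i j)
  have hm := frob_mul_sq E (C * E)
  have hN : 0 ≤ ∑ i, ∑ j, (E i j) ^ 2 :=
    Finset.sum_nonneg fun i _ => Finset.sum_nonneg fun j _ => sq_nonneg _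
  have hfin : frobNorm (B' - D) ≤ 3 / (4 * s) * frobNorm E ^ 2 := by
    unfold frobNorm
    rw [Real.sq_sqrt hN]
    refine Real.sqrt_le_iff.2 ⟨by positivity, ?_⟩
    have e : ∑ i, ∑ j, ((B' - D) i j) ^ 2 = 1 / 16 * ∑ i, ∑ j, ((E * (C * E)) i j) ^ 2 := by
      rw [key]
      simp only [Matrix.smul_apply, smul_eq_mul, mul_pow, Finset.mul_sum]
      norm_num
    rw [e]
    set N := ∑ i, ∑ j, (E i j) ^ 2
    have h1 : ∑ i, ∑ j, ((C * E) i j) ^ 2 ≤ N / (s / 3) ^ 2 := by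
      rw [le_div_iff₀ (by positivity), mul_comm]
      exact hCE
    have h2 := hm.trans (mul_le_mul_of_nonneg_left h1 hN)
    have h3 : (3 / (4 * s) * N) ^ 2 = 1 / 16 * (N * (N / (s / 3) ^ 2)) := by
      field_simp
      ring
    rw [h3]
    linarith
  refine hfin.trans (mul_le_mul_of_nonneg_right ?_ (sq_nonneg _))
  rw [div_le_div_iff₀ (by positivity) (by positivity)]
  nlinarith [mul_le_mul_of_nonneg_left hs1 hs0.le]
end

section
/- Let r ≤ r_A. If X* ∈ R^{m×r} is a global minimizer of the function X ↦ ‖XXᵀ − A‖_F² over R^{m×r}, then X* is weakly optimal, i.e., (X*)ᵀ A† X* = I_r, where A† = Q Σ⁻¹ Qᵀ is the Moore–Penrose pseudoinverse of A. -/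
open Matrix BigOperators

lemma frob_sq {m n : ℕ} (M : Matrix (Fin m) (Fin n) ℝ) :
    frobNorm M ^ 2 = ∑ i, ∑ j, (M i j) ^ 2 := by
  unfold frobNorm
  exact Real.sq_sqrt (Finset.sum_nonneg fun i _ => Finset.sum_nonneg fun j _ => sq_nonneg _)

lemma frob_expand {m : ℕ} (E S K : Matrix (Fin m) (Fin m) ℝ) (t : ℝ) :
    frobNorm (E + t • S + t ^ 2 • K) ^ 2 = frobNorm E ^ 2 + 2 * (∑ i, ∑ j, E i j * S i j) * t
      + (frobNorm S ^ 2 + 2 * ∑ i, ∑ j, E i j * K i j) * t ^ 2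
      + (2 * ∑ i, ∑ j, S i j * K i j) * t ^ 3 + frobNorm K ^ 2 * t ^ 4 := by
  simp only [frob_sq, Finset.mul_sum, Finset.sum_mul, ← Finset.sum_add_distrib]
  refine Finset.sum_congr rfl fun i _ => Finset.sum_congr rfl fun j _ => ?_
  simp only [Matrix.add_apply, Matrix.smul_apply, smul_eq_mul]
  ring

lemma nonneg_of_right (g : ℝ → ℝ) (hg : Continuous g) (h : ∀ t, 0 < t → 0 ≤ g t) : 0 ≤ g 0 := by
  have h1 : Filter.Tendsto g (nhdsWithin 0 (Set.Ioi 0)) (nhds (g 0)) :=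
    (hg.tendsto 0).mono_left nhdsWithin_le_nhds
  exact ge_of_tendsto h1 (by filter_upwards [self_mem_nhdsWithin] with t ht using h t ht)

lemma poly_first (a b c e : ℝ) (h : ∀ t : ℝ, 0 ≤ a * t + b * t ^ 2 + c * t ^ 3 + e * t ^ 4) :
    a = 0 := by
  have h1 := nonneg_of_right (fun t => a + b * t + c * t ^ 2 + e * t ^ 3) (by fun_prop)
    (fun t ht => by
      have := h t
      refine nonneg_of_mul_nonneg_right (a := t) ?_ ht
      linarith [this])
  have h2 := nonneg_of_right (fun t => -a + b * t - c * t ^ 2 + e * t ^ 3) (by fun_prop)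
    (fun t ht => by
      have := h (-t)
      refine nonneg_of_mul_nonneg_right (a := t) ?_ ht
      linarith [this])
  simp at h1 h2
  linarith

lemma poly_second (b e : ℝ) (h : ∀ t : ℝ, 0 ≤ b * t ^ 2 + e * t ^ 4) : 0 ≤ b := by
  have h1 := nonneg_of_right (fun t => b + e * t ^ 2) (by fun_prop)
    (fun t ht => by
      have := h t
      refine nonneg_of_mul_nonneg_right (a := t ^ 2) ?_ (by positivity)
      linarith [this])
  simpa using h1

lemma inner_trace {m n : ℕ} (E S : Matrix (Fin m) (Fin n) ℝ) :
    ∑ i, ∑ j, E i j * S i j = trace (E * Sᵀ) := by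
  simp [Matrix.trace, Matrix.mul_apply]

lemma pert {m r : ℕ} (X H : Matrix (Fin m) (Fin r) ℝ) (A : Matrix (Fin m) (Fin m) ℝ) (t : ℝ) :
    (X + t • H) * (X + t • H)ᵀ - A
      = (X * Xᵀ - A) + t • (H * Xᵀ + X * Hᵀ) + t ^ 2 • (H * Hᵀ) := by
  simp only [Matrix.transpose_add, Matrix.transpose_smul, Matrix.add_mul, Matrix.mul_add,
    Matrix.smul_mul, Matrix.mul_smul, smul_add, smul_smul, pow_two]
  abel

theorem stmt_4
    (m rA r : ℕ) (hr : r ≤ rA)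
    (A : Matrix (Fin m) (Fin m) ℝ)
    (Q : Matrix (Fin m) (Fin rA) ℝ) (d : Fin rA → ℝ)
    (hQ : Qᵀ * Q = 1)
    (hd : ∀ i, 0 < d i)
    (hdmono : ∀ i j : Fin rA, i ≤ j → d j ≤ d i)
    (hA : A = Q * Matrix.diagonal d * Qᵀ)
    (Xs : Matrix (Fin m) (Fin r) ℝ)
    (hmin : ∀ X : Matrix (Fin m) (Fin r) ℝ,
      frobNorm (Xs * Xsᵀ - A) ^ 2 ≤ frobNorm (X * Xᵀ - A) ^ 2) :
    Xsᵀ * (Q * (Matrix.diagonal d)⁻¹ * Qᵀ) * Xs = 1 := by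
  have hAT : Aᵀ = A := by
    rw [hA]; simp [Matrix.transpose_mul, Matrix.mul_assoc]
  have hET : (Xs * Xsᵀ - A)ᵀ = Xs * Xsᵀ - A := by
    simp [Matrix.transpose_sub, Matrix.transpose_mul, hAT]
  -- first order condition
  have hfo : (Xs * Xsᵀ - A) * Xs = 0 := by
    set E := Xs * Xsᵀ - A with hE
    have key := poly_first _ _ _ _ (fun t => by
      have h := hmin (Xs + t • (E * Xs))
      rw [pert, ← hE, frob_expand] at h
      have h' := sub_nonneg.2 h
      rw [add_assoc, add_assoc, add_assoc, add_sub_cancel_left, ← add_assoc, ← add_assoc] at h'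
      exact h')
    rw [inner_trace] at key
    have e1 : trace (E * (E * Xs * Xsᵀ + Xs * (E * Xs)ᵀ)ᵀ)
        = 2 * ∑ i, ∑ j, (E * Xs) i j * (E * Xs) i j := by
      rw [inner_trace]
      simp only [Matrix.transpose_add, Matrix.transpose_mul, Matrix.transpose_transpose, hET,
        Matrix.mul_add, Matrix.trace_add]
      have : trace (E * (E * Xs * Xsᵀ)) = trace (E * (Xs * (Xsᵀ * E))) := by
        rw [Matrix.trace_mul_comm, ← Matrix.trace_transpose]
        simp only [Matrix.transpose_mul, Matrix.transpose_transpose, hET, Matrix.mul_assoc]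
      simp only [Matrix.mul_assoc] at this ⊢
      linarith
    rw [e1] at key
    have k0 : ∑ i, ∑ j, (E * Xs) i j * (E * Xs) i j = 0 := by linarith
    ext i j
    have k1 := (Finset.sum_eq_zero_iff_of_nonneg (fun i _ =>
      Finset.sum_nonneg fun j _ => mul_self_nonneg ((E * Xs) i j))).1 k0 i (Finset.mem_univ _)
    have k2 := (Finset.sum_eq_zero_iff_of_nonneg (fun j _ =>
      mul_self_nonneg ((E * Xs) i j))).1 k1 j (Finset.mem_univ _)
    simpa using k2
  -- injectivity
  have hinj : ∀ v, Xs *ᵥ v = 0 → v = 0 := by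
    intro v hv
    by_contra hv0
    have hvv : 0 < v ⬝ᵥ v := by
      refine lt_of_le_of_ne (Finset.sum_nonneg fun i _ => mul_self_nonneg _) (fun h => hv0 ?_)
      exact dotProduct_self_eq_zero.1 h.symm
    have hso : ∀ u, 0 ≤ u ⬝ᵥ ((Xs * Xsᵀ - A) *ᵥ u) := by
      intro u
      have hS : vecMulVec u v * Xsᵀ + Xs * (vecMulVec u v)ᵀ = 0 := by
        rw [Matrix.transpose_vecMulVec, Matrix.mul_vecMulVec, Matrix.vecMulVec_mul,
          Matrix.vecMul_transpose, hv]
        simp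
      have hK : vecMulVec u v * (vecMulVec u v)ᵀ = (v ⬝ᵥ v) • vecMulVec u u := by
        ext i j
        simp only [Matrix.mul_apply, Matrix.vecMulVec_apply, Matrix.transpose_apply,
          Matrix.smul_apply, smul_eq_mul, dotProduct, Finset.sum_mul]
        exact Finset.sum_congr rfl fun k _ => by ring
      have key := poly_second (2 * ((v ⬝ᵥ v) * (u ⬝ᵥ ((Xs * Xsᵀ - A) *ᵥ u)))) _ (fun t => by
        have h := hmin (Xs + t • vecMulVec u v)
        rw [pert, frob_expand, hS, hK] at h
        have e1 : ∑ i, ∑ j, (Xs * Xsᵀ - A) i j * ((v ⬝ᵥ v) • vecMulVec u u) i j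
          = (v ⬝ᵥ v) * (u ⬝ᵥ ((Xs * Xsᵀ - A) *ᵥ u)) := by
          generalize Xs * Xsᵀ - A = E
          generalize v ⬝ᵥ v = c
          simp only [Matrix.smul_apply, smul_eq_mul, Matrix.vecMulVec_apply, dotProduct,
            Matrix.mulVec, Finset.mul_sum]
          exact Finset.sum_congr rfl fun i _ => Finset.sum_congr rfl fun j _ => by ring
        rw [e1] at h
        have e2 : frobNorm (0 : Matrix (Fin m) (Fin m) ℝ) ^ 2 = 0 := by simp [frob_sq]
        rw [e2] at h
        simp only [Matrix.zero_apply, mul_zero, zero_mul, Finset.sum_const_zero, add_zero,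
          zero_add] at h
        have h' := sub_nonneg.2 h
        rw [add_assoc, add_sub_cancel_left] at h'
        exact h')
      have : 0 ≤ (v ⬝ᵥ v) * (u ⬝ᵥ ((Xs * Xsᵀ - A) *ᵥ u)) := by linarith
      exact nonneg_of_mul_nonneg_right this hvv
    have hB : Function.Injective (Xsᵀ * Q).mulVecLin := by
      rw [← LinearMap.ker_eq_bot, LinearMap.ker_eq_bot']
      intro w hw
      rw [Matrix.mulVecLin_apply] at hw
      have h := hso (Q *ᵥ w)
      have e : ((Xs * Xsᵀ - A) *ᵥ (Q *ᵥ w)) = - (Q *ᵥ (diagonal d *ᵥ w)) := by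
        rw [Matrix.sub_mulVec, ← Matrix.mulVec_mulVec, Matrix.mulVec_mulVec w Xsᵀ Q, hw, hA]
        simp only [Matrix.mulVec_mulVec, Matrix.mul_assoc, hQ, Matrix.mulVec_zero]
        simp
      rw [e, dotProduct_neg, Matrix.dotProduct_mulVec, Matrix.vecMul_mulVec, hQ] at h
      have h2 : ∑ i, d i * (w i * w i) ≤ 0 := by
        have : w ⬝ᵥ (diagonal d *ᵥ w) = ∑ i, d i * (w i * w i) := by
          simp only [dotProduct, Matrix.mulVec_diagonal]
          exact Finset.sum_congr rfl fun i _ => by ring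
        simp at h
        linarith
      have hn : ∀ i ∈ Finset.univ, 0 ≤ d i * (w i * w i) := fun i _ =>
        mul_nonneg (hd i).le (mul_self_nonneg _)
      have h3 := (Finset.sum_eq_zero_iff_of_nonneg hn).1 (le_antisymm h2 (Finset.sum_nonneg hn))
      ext i
      have h4 := h3 i (Finset.mem_univ _)
      simpa [(hd i).ne'] using h4
    have hle := LinearMap.finrank_le_finrank_of_injective hB
    simp at hle
    obtain rfl : r = rA := le_antisymm hr hle
    obtain ⟨w, hw⟩ := LinearMap.injective_iff_surjective.1 hB v
    rw [Matrix.mulVecLin_apply, ← Matrix.mulVec_mulVec] at hw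
    have : v ⬝ᵥ v = 0 := by
      nth_rewrite 2 [← hw]
      rw [Matrix.dotProduct_mulVec, Matrix.vecMul_transpose, hv, zero_dotProduct]
    linarith
  -- conclusion
  have hG : IsUnit (Xsᵀ * Xs) := by
    rw [← Matrix.mulVec_injective_iff_isUnit]
    have : Function.Injective (Xsᵀ * Xs).mulVecLin := by
      rw [← LinearMap.ker_eq_bot, LinearMap.ker_eq_bot']
      intro v hv
      rw [Matrix.mulVecLin_apply] at hv
      apply hinj
      apply dotProduct_self_eq_zero.1
      rw [Matrix.dotProduct_mulVec, Matrix.vecMul_mulVec, ← Matrix.dotProduct_mulVec, hv,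
        dotProduct_zero]
    exact this
  have hAX : A * Xs = Xs * (Xsᵀ * Xs) := by
    rw [Matrix.sub_mul, sub_eq_zero] at hfo
    rw [← hfo, Matrix.mul_assoc]
  have hdd : (diagonal d)⁻¹ * diagonal d = 1 := by
    apply Matrix.nonsing_inv_mul
    rw [Matrix.det_diagonal, isUnit_iff_ne_zero]
    exact Finset.prod_ne_zero_iff.2 fun i _ => (hd i).ne'
  have hPA : Q * Qᵀ * A = A := by
    rw [hA]
    calc Q * Qᵀ * (Q * diagonal d * Qᵀ) = Q * (Qᵀ * Q) * diagonal d * Qᵀ := by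
          simp only [Matrix.mul_assoc]
      _ = _ := by rw [hQ, Matrix.mul_one]
  have hpA : Q * (diagonal d)⁻¹ * Qᵀ * A = Q * Qᵀ := by
    rw [hA]
    calc Q * (diagonal d)⁻¹ * Qᵀ * (Q * diagonal d * Qᵀ)
        = Q * ((diagonal d)⁻¹ * ((Qᵀ * Q) * diagonal d)) * Qᵀ := by
          simp only [Matrix.mul_assoc]
      _ = _ := by rw [hQ, Matrix.one_mul, hdd, Matrix.mul_one]
  obtain ⟨Gi, hGi⟩ := hG.exists_right_inv
  have hX : Xs = A * Xs * Gi := by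
    rw [hAX, Matrix.mul_assoc, hGi, Matrix.mul_one]
  have hPX : Q * Qᵀ * Xs = Xs := by
    rw [hX, ← Matrix.mul_assoc, ← Matrix.mul_assoc, hPA]
  apply hG.mul_right_cancel
  calc Xsᵀ * (Q * (diagonal d)⁻¹ * Qᵀ) * Xs * (Xsᵀ * Xs)
      = Xsᵀ * ((Q * (diagonal d)⁻¹ * Qᵀ) * (Xs * (Xsᵀ * Xs))) := by
        simp only [Matrix.mul_assoc]
    _ = Xsᵀ * ((Q * (diagonal d)⁻¹ * Qᵀ * A) * Xs) := by rw [← hAX]; simp only [Matrix.mul_assoc]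
    _ = 1 * (Xsᵀ * Xs) := by rw [hpA, hPX, Matrix.one_mul]
end

section
/- Suppose r < r_A (under-parametrization), rank(X_0) = r, and 0 < η ≤ 1. Then for every t ≥ 0 the ScaledGD iterate satisfies X_t = Q Φ_t for some Φ_t ∈ R^{r_A×r} of rank r; equivalently, (I_m − QQᵀ) X_t = 0 for all t, i.e., Nyström initialization eliminates the residual space along the entire trajectory. -/
open Matrix BigOperators

lemma rank_eq_iff_inj {n r : ℕ} (M : Matrix (Fin n) (Fin r) ℝ) :
    M.rank = r ↔ ∀ v, M *ᵥ v = 0 → v = 0 := by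
  have h := LinearMap.finrank_range_add_finrank_ker M.mulVecLin
  have h1 : M.rank = Module.finrank ℝ (LinearMap.range M.mulVecLin) := rfl
  rw [← h1] at h
  simp only [Module.finrank_fintype_fun_eq_card, Fintype.card_fin] at h
  have h2 : (∀ v, M *ᵥ v = 0 → v = 0) ↔ LinearMap.ker M.mulVecLin = ⊥ := by
    rw [LinearMap.ker_eq_bot']
    rfl
  rw [h2, ← Submodule.finrank_eq_zero (R := ℝ)]
  omega

lemma gram_isUnit {n r : ℕ} (M : Matrix (Fin n) (Fin r) ℝ) (h : M.rank = r) :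
    IsUnit (Mᵀ * M).det := by
  rw [← Matrix.isUnit_iff_isUnit_det, ← Matrix.mulVec_injective_iff_isUnit]
  have h3 : (Mᵀ * M).rank = r := by rw [Matrix.rank_transpose_mul_self, h]
  rw [rank_eq_iff_inj] at h3
  intro a b hab
  have := h3 (a - b) (by rw [Matrix.mulVec_sub]; exact sub_eq_zero.2 hab)
  exact sub_eq_zero.1 this

lemma step_rank {n r : ℕ} (M : Matrix (Fin n) (Fin r) ℝ) (h : M.rank = r) (d : Fin n → ℝ)
    (hd : ∀ i, 0 < d i) (η : ℝ) (hη0 : 0 < η) (hη1 : η ≤ 1) :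
    ((1 - η) • M + η • (Matrix.diagonal d * M * (Mᵀ * M)⁻¹)).rank = r := by
  have hu := gram_isUnit M h
  rw [rank_eq_iff_inj] at h ⊢
  intro v hv
  obtain ⟨w, rfl⟩ : ∃ w, v = (Mᵀ * M) *ᵥ w :=
    ⟨(Mᵀ * M)⁻¹ *ᵥ v, by rw [Matrix.mulVec_mulVec, Matrix.mul_nonsing_inv _ hu, Matrix.one_mulVec]⟩
  have h1 : (1 - η) • (M *ᵥ ((Mᵀ * M) *ᵥ w)) + η • (Matrix.diagonal d *ᵥ (M *ᵥ w)) = 0 := by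
    rw [← hv, Matrix.add_mulVec, Matrix.smul_mulVec, Matrix.smul_mulVec,
      Matrix.mulVec_mulVec w (Matrix.diagonal d * M * (Mᵀ * M)⁻¹),
      Matrix.mul_assoc (Matrix.diagonal d * M),
      Matrix.nonsing_inv_mul _ hu, Matrix.mul_one, ← Matrix.mulVec_mulVec w (Matrix.diagonal d)]
  have h2 := congrArg (fun z => (M *ᵥ w) ⬝ᵥ z) h1
  simp only [dotProduct_add, dotProduct_smul, dotProduct_zero, smul_eq_mul] at h2
  have h3 : (M *ᵥ w) ⬝ᵥ (M *ᵥ ((Mᵀ * M) *ᵥ w))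
      = ((Mᵀ * M) *ᵥ w) ⬝ᵥ ((Mᵀ * M) *ᵥ w) := by
    rw [Matrix.dotProduct_mulVec, ← Matrix.mulVec_transpose, Matrix.mulVec_mulVec]
  have h4 : 0 ≤ ((Mᵀ * M) *ᵥ w) ⬝ᵥ ((Mᵀ * M) *ᵥ w) :=
    Finset.sum_nonneg fun i _ => mul_self_nonneg _
  have h5 : (M *ᵥ w) ⬝ᵥ (Matrix.diagonal d *ᵥ (M *ᵥ w)) = ∑ i, d i * ((M *ᵥ w) i) ^ 2 := by
    simp only [dotProduct, Matrix.mulVec_diagonal]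
    exact Finset.sum_congr rfl fun i _ => by ring
  have h6 : ∀ i ∈ Finset.univ, 0 ≤ d i * ((M *ᵥ w) i) ^ 2 :=
    fun i _ => mul_nonneg (hd i).le (sq_nonneg _)
  rw [h3, h5] at h2
  have h7 : ∑ i, d i * ((M *ᵥ w) i) ^ 2 = 0 := by
    have a := Finset.sum_nonneg h6
    have b := mul_nonneg (sub_nonneg.2 hη1) h4
    have c : η * ∑ i, d i * ((M *ᵥ w) i) ^ 2 = 0 :=
      le_antisymm (by linarith) (mul_nonneg hη0.le a)
    exact (mul_eq_zero.1 c).resolve_left hη0.ne'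
  rw [Finset.sum_eq_zero_iff_of_nonneg h6] at h7
  have h8 : M *ᵥ w = 0 := by
    funext i
    have := (mul_eq_zero.1 (h7 i (Finset.mem_univ i))).resolve_left (hd i).ne'
    simpa using this
  rw [h w h8, Matrix.mulVec_zero]

/-- Residual-space elimination for ScaledGD with Nyström initialization in the symmetric
under-parametrized setting (`r < r_A`): every iterate satisfies `X_t = QΦ_t` for some
`Φ_t ∈ ℝ^{r_A×r}` of rank `r`; equivalently `(I − QQᵀ)X_t = 0` for all `t`. -/
theorem stmt_5
    (m rA r : ℕ) (hrrA : r < rA)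
    (A : Matrix (Fin m) (Fin m) ℝ)
    (Q : Matrix (Fin m) (Fin rA) ℝ) (d : Fin rA → ℝ)
    (hQ : Qᵀ * Q = 1)
    (hd : ∀ i, 0 < d i)
    (hdmono : ∀ i j : Fin rA, i ≤ j → d j ≤ d i)
    (hA : A = Q * Matrix.diagonal d * Qᵀ)
    (η : ℝ) (hη0 : 0 < η) (hη1 : η ≤ 1)
    (Ω : Matrix (Fin m) (Fin r) ℝ)
    (X : ℕ → Matrix (Fin m) (Fin r) ℝ)
    (hX0 : X 0 = A * Ω)
    (hrank : (X 0).rank = r)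
    (hrec : ∀ t : ℕ,
      X (t + 1) = X t - η • ((X t * (X t)ᵀ - A) * X t * ((X t)ᵀ * X t)⁻¹)) :
    (∀ t : ℕ, ∃ Φ : Matrix (Fin rA) (Fin r) ℝ, Φ.rank = r ∧ X t = Q * Φ) ∧
    (∀ t : ℕ, (1 - Q * Qᵀ) * X t = 0) := by
  have main : ∀ t : ℕ, ∃ Φ : Matrix (Fin rA) (Fin r) ℝ, Φ.rank = r ∧ X t = Q * Φ := by
    intro t
    induction t with
    | zero =>
      have e : X 0 = Q * (Matrix.diagonal d * Qᵀ * Ω) := by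
        rw [hX0, hA]; simp only [Matrix.mul_assoc]
      refine ⟨_, le_antisymm ?_ ?_, e⟩
      · simpa using Matrix.rank_le_width (Matrix.diagonal d * Qᵀ * Ω)
      · have h := Matrix.rank_mul_le_right Q (Matrix.diagonal d * Qᵀ * Ω)
        rw [← e] at h
        exact hrank.symm.le.trans h
    | succ t ih =>
      obtain ⟨M, hM, hX⟩ := ih
      refine ⟨_, step_rank M hM d hd η hη0 hη1, ?_⟩
      have hu := gram_isUnit M hM
      have hg : (X t)ᵀ * X t = Mᵀ * M := by
        rw [hX, Matrix.transpose_mul, Matrix.mul_assoc, ← Matrix.mul_assoc Qᵀ, hQ, Matrix.one_mul]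
      have h1 : X t * (X t)ᵀ * X t * (Mᵀ * M)⁻¹ = Q * M := by
        rw [Matrix.mul_assoc (X t), hg, Matrix.mul_assoc, Matrix.mul_nonsing_inv _ hu,
          Matrix.mul_one, hX]
      have h2 : A * X t = Q * (Matrix.diagonal d * M) := by
        rw [hX, hA, Matrix.mul_assoc (Q * _), ← Matrix.mul_assoc Qᵀ, hQ, Matrix.one_mul,
          Matrix.mul_assoc]
      rw [hrec, hg, Matrix.sub_mul, Matrix.sub_mul, h1, h2, hX, Matrix.mul_add, Matrix.mul_smul,
        Matrix.mul_smul, Matrix.mul_assoc Q (Matrix.diagonal d * M)]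
      module
  refine ⟨main, fun t => ?_⟩
  obtain ⟨M, -, hX⟩ := main t
  rw [hX, Matrix.sub_mul, Matrix.one_mul, Matrix.mul_assoc Q, ← Matrix.mul_assoc Qᵀ, hQ,
    Matrix.one_mul, sub_self]
end

section
/- Suppose r < r_A, the largest eigenvalue of A is σ_1(A) = 1, let Q_1 ∈ R^{m×r} consist of the first r columns of Q and Σ_1 ∈ R^{r×r} the top-left r×r block of Σ, and set X* = Q_1 Σ_1^{1/2}. If X = Q Φ for some Φ ∈ R^{r_A×r} satisfying Φᵀ Σ⁻¹ Φ = I_r (i.e., X is weakly optimal, Xᵀ A† X = I_r with A† = QΣ⁻¹Qᵀ), then ‖X − X*‖_F² ≤ 2r + 2 r^{3/2} + r · σ_{r+1}(A); in particular ‖X − X*‖_F² ≤ 3r + 2 r^{3/2}. -/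
open Matrix BigOperators

/-- Distance of a weakly optimal point to a global optimum in the symmetric
under-parametrized setting: if `σ_1(A) = 1`, `X = QΦ` with `ΦᵀΣ⁻¹Φ = I_r`
(weak optimality), and `X* = Q_1 Σ_1^{1/2}`, then
`‖X − X*‖_F² ≤ 2r + 2r^{3/2} + r·σ_{r+1}(A) ≤ 3r + 2r^{3/2}`. -/
theorem stmt_9
    (m rA r : ℕ) (hrrA : r < rA)
    (A : Matrix (Fin m) (Fin m) ℝ)
    (Q : Matrix (Fin m) (Fin rA) ℝ) (d : Fin rA → ℝ)
    (hQ : Qᵀ * Q = 1)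
    (hd : ∀ i, 0 < d i)
    (hdmono : ∀ i j : Fin rA, i ≤ j → d j ≤ d i)
    (hA : A = Q * Matrix.diagonal d * Qᵀ)
    (hσ1 : d ⟨0, Nat.lt_of_le_of_lt (Nat.zero_le r) hrrA⟩ = 1)
    (Φ : Matrix (Fin rA) (Fin r) ℝ)
    (X : Matrix (Fin m) (Fin r) ℝ)
    (hX : X = Q * Φ)
    (hweak : Φᵀ * (Matrix.diagonal d)⁻¹ * Φ = 1)
    (Xstar : Matrix (Fin m) (Fin r) ℝ)
    (hXstar : ∀ (i : Fin m) (j : Fin r),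
      Xstar i j = Q i (Fin.castLE hrrA.le j) * Real.sqrt (d (Fin.castLE hrrA.le j))) :
    frobNorm (X - Xstar) ^ 2
        ≤ 2 * r + 2 * (r * Real.sqrt r) + r * d ⟨r, hrrA⟩ ∧
    frobNorm (X - Xstar) ^ 2 ≤ 3 * r + 2 * (r * Real.sqrt r) := by
  have hd1 : ∀ i, d i ≤ 1 := fun i => by
    rw [← hσ1]; exact hdmono _ _ (Fin.mk_le_of_le_val (Nat.zero_le _))
  have hinv : (Matrix.diagonal d)⁻¹ = Matrix.diagonal (fun i => (d i)⁻¹) := by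
    apply Matrix.inv_eq_right_inv
    rw [Matrix.diagonal_mul_diagonal, ← Matrix.diagonal_one]
    congr 1
    funext i
    exact mul_inv_cancel₀ (hd i).ne'
  have hXX : Xᵀ * X = Φᵀ * Φ := by
    rw [hX, Matrix.transpose_mul, Matrix.mul_assoc, ← Matrix.mul_assoc Qᵀ, hQ, Matrix.one_mul]
  have h1 : ∀ j, ∑ i, (X i j) ^ 2 ≤ 1 := by
    intro j
    have e1 := congrFun (congrFun hXX j) j
    have e2 := congrFun (congrFun hweak j) j
    rw [hinv] at e2
    rw [Matrix.mul_apply] at e2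
    simp only [Matrix.mul_diagonal, Matrix.transpose_apply, Matrix.one_apply_eq] at e2
    simp only [Matrix.mul_apply, Matrix.transpose_apply] at e1
    calc ∑ i, (X i j) ^ 2 = ∑ i, X i j * X i j := by simp only [sq]
      _ = ∑ i, Φ i j * Φ i j := e1
      _ ≤ ∑ i, Φ i j * (d i)⁻¹ * Φ i j := by
        apply Finset.sum_le_sum
        intro i _
        have h := (one_le_inv₀ (hd i)).2 (hd1 i)
        nlinarith [mul_self_nonneg (Φ i j)]
      _ = 1 := e2
  have h2 : ∀ j, ∑ i, (Xstar i j) ^ 2 ≤ 1 := by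
    intro j
    have e := congrFun (congrFun hQ (Fin.castLE hrrA.le j)) (Fin.castLE hrrA.le j)
    simp only [Matrix.mul_apply, Matrix.transpose_apply, Matrix.one_apply_eq] at e
    calc ∑ i, (Xstar i j) ^ 2
        = (∑ i, Q i (Fin.castLE hrrA.le j) * Q i (Fin.castLE hrrA.le j))
            * d (Fin.castLE hrrA.le j) := by
          rw [Finset.sum_mul]
          apply Finset.sum_congr rfl
          intro i _
          rw [hXstar, mul_pow, Real.sq_sqrt (hd _).le, sq]
      _ ≤ 1 := by rw [e, one_mul]; exact hd1 _
  have h4 : frobNorm (X - Xstar) ^ 2 ≤ 4 * r := by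
    unfold frobNorm
    have hs : (0 : ℝ) ≤ ∑ i, ∑ j, ((X - Xstar) i j) ^ 2 :=
      Finset.sum_nonneg fun i _ => Finset.sum_nonneg fun j _ => sq_nonneg _
    rw [Real.sq_sqrt hs, Finset.sum_comm]
    calc ∑ j, ∑ i, ((X - Xstar) i j) ^ 2 ≤ ∑ j : Fin r, (4 : ℝ) := by
          apply Finset.sum_le_sum
          intro j _
          calc ∑ i, ((X - Xstar) i j) ^ 2
              ≤ ∑ i, (2 * (X i j) ^ 2 + 2 * (Xstar i j) ^ 2) := by
                apply Finset.sum_le_sum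
                intro i _
                rw [Matrix.sub_apply]
                nlinarith [sq_nonneg (X i j + Xstar i j)]
            _ = 2 * ∑ i, (X i j) ^ 2 + 2 * ∑ i, (Xstar i j) ^ 2 := by
                rw [Finset.sum_add_distrib, Finset.mul_sum, Finset.mul_sum]
            _ ≤ 4 := by linarith [h1 j, h2 j]
      _ = 4 * r := by simp [mul_comm]
  have hr0 : (0 : ℝ) ≤ r := Nat.cast_nonneg r
  have h5 : (r : ℝ) ≤ r * Real.sqrt r := by
    rcases Nat.eq_zero_or_pos r with h | h
    · simp [h]
    · have : (1 : ℝ) ≤ Real.sqrt r := Real.one_le_sqrt.2 (by exact_mod_cast h)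
      nlinarith
  have h6 := mul_nonneg hr0 (hd ⟨r, hrrA⟩).le
  constructor <;> linarith
end

section
/- Suppose r = r_A (exact-parametrization), rank(X_0) = r, and 0 < η ≤ 1. Then for every t ≥ 0 the modified ScaledGD iterates satisfy X_t = U Φ_t and Y_t = V Ψ_t for some Φ_t, Ψ_t ∈ R^{r×r}; equivalently, (I_m − UUᵀ) X_t = 0 and (I_n − VVᵀ) Y_t = 0 for all t. Moreover, for all t ≥ 1 both Φ_t and Ψ_t are invertible, so the iteration is well defined. -/
open Matrix BigOperators

theorem aux_step_s10 {m n r : ℕ} (B : Matrix (Fin m) (Fin r) ℝ) (C : Matrix (Fin n) (Fin r) ℝ)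
    (hC : IsUnit (Cᵀ * C)) (a c : ℝ) (hc : c ≠ 0) :
    ((a • B) * (c • C)ᵀ - B * Cᵀ) * (c • C) * ((c • C)ᵀ * (c • C))⁻¹ = ((a * c - 1) / c) • B := by
  have hdet := (Matrix.isUnit_iff_isUnit_det _).1 hC
  have h1 : ((c • C)ᵀ * (c • C))⁻¹ = (c⁻¹ * c⁻¹) • (Cᵀ * C)⁻¹ := by
    apply Matrix.inv_eq_right_inv
    simp only [transpose_smul, Matrix.smul_mul, Matrix.mul_smul, smul_smul,
      Matrix.mul_nonsing_inv _ hdet]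
    rw [show c⁻¹ * c⁻¹ * (c * c) = 1 by field_simp, one_smul]
  have h2 : (a • B) * (c • C)ᵀ - B * Cᵀ = (a * c - 1) • (B * Cᵀ) := by
    simp only [transpose_smul, Matrix.smul_mul, Matrix.mul_smul, smul_smul, sub_smul, one_smul,
      mul_comm]
  rw [h1, h2]
  simp only [Matrix.smul_mul, Matrix.mul_smul, smul_smul]
  rw [Matrix.mul_assoc B, Matrix.mul_assoc B, Matrix.mul_nonsing_inv _ hdet, Matrix.mul_one]
  congr 1
  field_simp

theorem aux_gram {m r : ℕ} (U : Matrix (Fin m) (Fin r) ℝ) (P : Matrix (Fin r) (Fin r) ℝ)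
    (hU : Uᵀ * U = 1) (hP : IsUnit P) : IsUnit ((U * P)ᵀ * (U * P)) := by
  have : (U * P)ᵀ * (U * P) = Pᵀ * P := by
    rw [transpose_mul, Matrix.mul_assoc, ← Matrix.mul_assoc Uᵀ, hU, Matrix.one_mul]
  rw [this]
  exact ((Matrix.isUnit_transpose P).2 hP).mul hP

/-- Directional alignment of the modified ScaledGD with Nyström initialization in the
asymmetric exact-parametrized setting: every iterate satisfies `X_t = UΦ_t`, `Y_t = VΨ_t`
(equivalently `(I − UUᵀ)X_t = 0`, `(I − VVᵀ)Y_t = 0`), and for `t ≥ 1` both `Φ_t` and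
`Ψ_t` are invertible, so the iteration is well defined. -/
theorem stmt_10
    (m n r : ℕ) (hr : 0 < r)
    (A : Matrix (Fin m) (Fin n) ℝ)
    (U : Matrix (Fin m) (Fin r) ℝ) (V : Matrix (Fin n) (Fin r) ℝ) (d : Fin r → ℝ)
    (hU : Uᵀ * U = 1) (hV : Vᵀ * V = 1)
    (hd : ∀ i, 0 < d i)
    (hdmono : ∀ i j : Fin r, i ≤ j → d j ≤ d i)
    (hA : A = U * Matrix.diagonal d * Vᵀ)
    (η : ℝ) (hη0 : 0 < η) (hη1 : η ≤ 1)
    (Ω : Matrix (Fin n) (Fin r) ℝ)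
    (X : ℕ → Matrix (Fin m) (Fin r) ℝ) (Y : ℕ → Matrix (Fin n) (Fin r) ℝ)
    (hX0 : X 0 = A * Ω)
    (hrank : (X 0).rank = r)
    (hY0 : Y 0 = 0)
    (hX1 : X 1 = X 0)
    (hXrec : ∀ t : ℕ, 1 ≤ t →
      X (t + 1) = X t - η • ((X t * (Y t)ᵀ - A) * Y t * ((Y t)ᵀ * Y t)⁻¹))
    (hYrec : ∀ t : ℕ,
      Y (t + 1) = Y t - η • ((X t * (Y t)ᵀ - A)ᵀ * X t * ((X t)ᵀ * X t)⁻¹)) :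
    (∀ t : ℕ, ∃ (Φ Ψ : Matrix (Fin r) (Fin r) ℝ), X t = U * Φ ∧ Y t = V * Ψ) ∧
    (∀ t : ℕ, (1 - U * Uᵀ) * X t = 0 ∧ (1 - V * Vᵀ) * Y t = 0) ∧
    (∀ t : ℕ, 1 ≤ t → ∃ (Φ Ψ : Matrix (Fin r) (Fin r) ℝ),
      IsUnit Φ ∧ IsUnit Ψ ∧ X t = U * Φ ∧ Y t = V * Ψ) := by
  set P : Matrix (Fin r) (Fin r) ℝ := diagonal d * Vᵀ * Ω with hPdef
  have hXP : X 0 = U * P := by rw [hX0, hA, hPdef]; simp only [Matrix.mul_assoc]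
  have hP : IsUnit P := by
    have h1 : r ≤ P.rank := by
      rw [hXP] at hrank
      have := Matrix.rank_mul_le_right U P
      omega
    rw [← Matrix.linearIndependent_cols_iff_isUnit, linearIndependent_iff_card_eq_finrank_span,
      Set.finrank, ← Matrix.rank_eq_finrank_span_cols, Fintype.card_fin]
    have := P.rank_le_width
    omega
  have hdiag : IsUnit (diagonal d) := by
    rw [Matrix.isUnit_iff_isUnit_det, det_diagonal, isUnit_iff_ne_zero]
    exact Finset.prod_ne_zero_iff.2 fun i _ => (hd i).ne'
  have hPdet := (Matrix.isUnit_iff_isUnit_det _).1 hP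
  set Q : Matrix (Fin r) (Fin r) ℝ := diagonal d * (P⁻¹)ᵀ with hQdef
  have hQ : IsUnit Q :=
    hdiag.mul ((Matrix.isUnit_transpose _).2 ((Matrix.isUnit_nonsing_inv_iff).2 hP))
  have hPQ : A = (U * P) * (V * Q)ᵀ := by
    rw [hA, hQdef]
    simp only [transpose_mul, transpose_transpose, diagonal_transpose, Matrix.mul_assoc]
    rw [← Matrix.mul_assoc P, Matrix.mul_nonsing_inv _ hPdet, Matrix.one_mul]
  have hB := aux_gram U P hU hP
  have hC := aux_gram V Q hV hQ
  have key : ∀ t : ℕ, ∃ a c : ℝ, 0 < a ∧ 0 < c ∧ X (t + 1) = a • (U * P) ∧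
      Y (t + 1) = c • (V * Q) := by
    have hy : ∀ (t : ℕ) (a c : ℝ), 0 < a → X t = a • (U * P) → Y t = c • (V * Q) →
        Y (t + 1) = (c - η * ((c * a - 1) / a)) • (V * Q) := by
      intro t a c ha hx hy
      have := aux_step_s10 (V * Q) (U * P) hB c a ha.ne'
      have h2 : (X t * (Y t)ᵀ - A)ᵀ = (c • (V * Q)) * (a • (U * P))ᵀ - (V * Q) * (U * P)ᵀ := by
        rw [hx, hy, hPQ, transpose_sub, transpose_mul, transpose_transpose, transpose_mul (U * P),
          transpose_transpose]
      rw [hYrec, h2, hx, hy, this, sub_smul, smul_smul]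
    intro t
    induction t with
    | zero =>
      refine ⟨1, η, one_pos, hη0, by rw [one_smul, hX1, hXP], ?_⟩
      rw [hy 0 1 0 one_pos (by rw [one_smul, hXP]) (by rw [zero_smul, hY0])]
      congr 1
      ring
    | succ t ih =>
      obtain ⟨a, c, ha, hc, hx, hy'⟩ := ih
      refine ⟨a - η * ((a * c - 1) / c), c - η * ((c * a - 1) / a), ?_, ?_, ?_,
        hy _ a c ha hx hy'⟩
      · have : a - η * ((a * c - 1) / c) = (1 - η) * a + η / c := by field_simp; ring
        rw [this]
        have : 0 ≤ (1 - η) * a := mul_nonneg (by linarith) ha.le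
        positivity
      · have : c - η * ((c * a - 1) / a) = (1 - η) * c + η / a := by field_simp; ring
        rw [this]
        have : 0 ≤ (1 - η) * c := mul_nonneg (by linarith) hc.le
        positivity
      · rw [hXrec _ (by omega), hx, hy', hPQ, aux_step_s10 _ _ hC a c hc.ne', sub_smul, smul_smul]
  have h3 : ∀ t : ℕ, 1 ≤ t → ∃ (Φ Ψ : Matrix (Fin r) (Fin r) ℝ),
      IsUnit Φ ∧ IsUnit Ψ ∧ X t = U * Φ ∧ Y t = V * Ψ := by
    intro t ht
    obtain ⟨s, rfl⟩ : ∃ s, t = s + 1 := ⟨t - 1, by omega⟩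
    obtain ⟨a, c, ha, hc, hx, hy⟩ := key s
    refine ⟨a • P, c • Q, ?_, ?_, by rw [hx, Matrix.mul_smul], by rw [hy, Matrix.mul_smul]⟩
    · exact hP.smul (Units.mk0 a ha.ne')
    · exact hQ.smul (Units.mk0 c hc.ne')
  have h1 : ∀ t : ℕ, ∃ (Φ Ψ : Matrix (Fin r) (Fin r) ℝ), X t = U * Φ ∧ Y t = V * Ψ := by
    intro t
    rcases Nat.eq_zero_or_pos t with rfl | ht
    · exact ⟨P, 0, hXP, by rw [hY0, Matrix.mul_zero]⟩
    · obtain ⟨Φ, Ψ, _, _, h⟩ := h3 t ht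
      exact ⟨Φ, Ψ, h⟩
  refine ⟨h1, fun t => ?_, h3⟩
  obtain ⟨Φ, Ψ, hx, hy⟩ := h1 t
  constructor
  · rw [hx, Matrix.sub_mul, Matrix.one_mul, Matrix.mul_assoc, ← Matrix.mul_assoc Uᵀ, hU,
      Matrix.one_mul, sub_self]
  · rw [hy, Matrix.sub_mul, Matrix.one_mul, Matrix.mul_assoc, ← Matrix.mul_assoc Vᵀ, hV,
      Matrix.one_mul, sub_self]
end

section
/- Let A ∈ R^{m×n} have rank r and let Ω ∈ R^{n×r} be such that rank(AΩ) = r. Set X_1 = AΩ and Y_1 = Aᵀ X_1 (X_1ᵀ X_1)⁻¹ (the first modified ScaledGD step with η = 1 starting from X_0 = AΩ, Y_0 = 0). Then X_1 Y_1ᵀ = A; that is, ScaledGD with Nyström initialization and η = 1 achieves exact global convergence for asymmetric matrix factorization min_{X,Y} ‖XYᵀ − A‖_F² in a single step. -/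
open Matrix BigOperators

/-- One-step global convergence of modified ScaledGD with Nyström initialization and
step size `η = 1` for asymmetric exact-parametrized matrix factorization:
with `X_1 = AΩ` of rank `r = rank(A)` and `Y_1 = Aᵀ X_1 (X_1ᵀ X_1)⁻¹`,
one has `X_1 Y_1ᵀ = A`. -/
theorem stmt_11
    (m n r : ℕ)
    (A : Matrix (Fin m) (Fin n) ℝ) (hA : A.rank = r)
    (Ω : Matrix (Fin n) (Fin r) ℝ)
    (X : Matrix (Fin m) (Fin r) ℝ) (hX : X = A * Ω)
    (hXrank : X.rank = r)
    (Y : Matrix (Fin n) (Fin r) ℝ) (hY : Y = Aᵀ * X * (Xᵀ * X)⁻¹) :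
    X * Yᵀ = A := by
  have hr : LinearMap.range X.mulVecLin = LinearMap.range A.mulVecLin := by
    apply Submodule.eq_of_le_of_finrank_eq
    · rw [hX, Matrix.mulVecLin_mul]
      exact LinearMap.range_comp_le_range _ _
    · change X.rank = A.rank
      rw [hXrank, hA]
  have hB : ∃ B : Matrix (Fin r) (Fin n) ℝ, A = X * B := by
    have h : ∀ j, ∃ v, X *ᵥ v = A.col j := by
      intro j
      have : A.col j ∈ LinearMap.range X.mulVecLin := by
        rw [hr]
        exact ⟨Pi.single j 1, by simp⟩
      simpa using this
    choose v hv using h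
    refine ⟨Matrix.of fun i j => v j i, ?_⟩
    ext i j
    have := congrFun (hv j) i
    simpa [Matrix.mul_apply, Matrix.mulVec, dotProduct] using this.symm
  have hu : IsUnit (Xᵀ * X).det := by
    rw [← Matrix.isUnit_iff_isUnit_det, ← Matrix.mulVec_surjective_iff_isUnit]
    have h1 : (Xᵀ * X).rank = r := by rw [Matrix.rank_transpose_mul_self, hXrank]
    have h2 : LinearMap.range (Xᵀ * X).mulVecLin = ⊤ := by
      apply Submodule.eq_top_of_finrank_eq
      change (Xᵀ * X).rank = _
      rw [h1]; simp
    exact LinearMap.range_eq_top.mp h2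
  obtain ⟨B, hB⟩ := hB
  have ht : Yᵀ = (Xᵀ * X)⁻¹ * (Xᵀ * A) := by
    rw [hY]
    simp [Matrix.transpose_mul, Matrix.transpose_nonsing_inv]
  rw [ht, hB, ← Matrix.mul_assoc Xᵀ X B, Matrix.nonsing_inv_mul_cancel_left _ _ hu]
end

section
/- Let Σ ∈ R^{r×r} be diagonal with positive diagonal entries, let 0 < η ≤ 1, and let Φ, Ψ ∈ R^{r×r} be invertible matrices such that ΦΨᵀ is symmetric positive definite. Define Φ' = (1−η) Φ + η Σ Ψ^{−ᵀ} and Ψ' = (1−η) Ψ + η Σ Φ^{−ᵀ} (one modified ScaledGD step in the reduced coordinates). Then Φ' (Ψ')ᵀ = (1−η)² ΦΨᵀ + 2η(1−η) Σ + η² Σ (ΦΨᵀ)⁻¹ Σ, and this matrix is again symmetric positive definite. -/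
open Matrix BigOperators

/-- One modified ScaledGD step in reduced coordinates for the asymmetric
exact-parametrized setting: with `Φ' = (1−η)Φ + ηΣΨ^{−ᵀ}` and `Ψ' = (1−η)Ψ + ηΣΦ^{−ᵀ}`,
one has `Φ'(Ψ')ᵀ = (1−η)²ΦΨᵀ + 2η(1−η)Σ + η²Σ(ΦΨᵀ)⁻¹Σ`, and this matrix is again
symmetric positive definite. -/
theorem stmt_12
    (r : ℕ)
    (d : Fin r → ℝ) (hd : ∀ i, 0 < d i)
    (η : ℝ) (hη0 : 0 < η) (hη1 : η ≤ 1)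
    (Φ Ψ : Matrix (Fin r) (Fin r) ℝ)
    (hΦ : IsUnit Φ) (hΨ : IsUnit Ψ)
    (hPD : (Φ * Ψᵀ).PosDef)
    (Φ' Ψ' : Matrix (Fin r) (Fin r) ℝ)
    (hΦ' : Φ' = (1 - η) • Φ + η • (Matrix.diagonal d * (Ψᵀ)⁻¹))
    (hΨ' : Ψ' = (1 - η) • Ψ + η • (Matrix.diagonal d * (Φᵀ)⁻¹)) :
    Φ' * Ψ'ᵀ
        = (1 - η) ^ 2 • (Φ * Ψᵀ) + (2 * η * (1 - η)) • Matrix.diagonal d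
          + η ^ 2 • (Matrix.diagonal d * (Φ * Ψᵀ)⁻¹ * Matrix.diagonal d) ∧
    (Φ' * Ψ'ᵀ).PosDef := by
  have hΦd : IsUnit Φ.det := (Matrix.isUnit_iff_isUnit_det _).1 hΦ
  have hΨd : IsUnit (Ψᵀ).det := by
    rw [Matrix.det_transpose]
    exact (Matrix.isUnit_iff_isUnit_det _).1 hΨ
  have hD : (Matrix.diagonal d).PosDef := Matrix.PosDef.diagonal hd
  have hT : Ψ'ᵀ = (1 - η) • Ψᵀ + η • (Φ⁻¹ * Matrix.diagonal d) := by
    rw [hΨ', Matrix.transpose_add, Matrix.transpose_smul, Matrix.transpose_smul,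
      Matrix.transpose_mul, Matrix.diagonal_transpose, Matrix.transpose_nonsing_inv,
      Matrix.transpose_transpose]
  have h1 : Φ * (Φ⁻¹ * Matrix.diagonal d) = Matrix.diagonal d :=
    Matrix.mul_nonsing_inv_cancel_left _ _ hΦd
  have h2 : Matrix.diagonal d * (Ψᵀ)⁻¹ * Ψᵀ = Matrix.diagonal d :=
    Matrix.nonsing_inv_mul_cancel_right _ _ hΨd
  have h3 : Matrix.diagonal d * (Ψᵀ)⁻¹ * (Φ⁻¹ * Matrix.diagonal d)
      = Matrix.diagonal d * (Φ * Ψᵀ)⁻¹ * Matrix.diagonal d := by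
    rw [Matrix.mul_inv_rev]
    simp only [Matrix.mul_assoc]
  have key : Φ' * Ψ'ᵀ
        = (1 - η) ^ 2 • (Φ * Ψᵀ) + (2 * η * (1 - η)) • Matrix.diagonal d
          + η ^ 2 • (Matrix.diagonal d * (Φ * Ψᵀ)⁻¹ * Matrix.diagonal d) := by
    rw [hT, hΦ', Matrix.add_mul, Matrix.mul_add, Matrix.mul_add]
    simp only [Matrix.smul_mul, Matrix.mul_smul]
    rw [h1, h2, h3]
    module
  refine ⟨key, ?_⟩
  rw [key]
  have h4 : (Matrix.diagonal d * (Φ * Ψᵀ)⁻¹ * Matrix.diagonal d).PosDef := by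
    have h := (Matrix.IsUnit.posDef_star_left_conjugate_iff (x := (Φ * Ψᵀ)⁻¹) hD.isUnit).2 hPD.inv
    rwa [Matrix.star_eq_conjTranspose, hD.isHermitian.eq] at h
  refine Matrix.PosDef.posSemidef_add (Matrix.PosSemidef.add (hPD.posSemidef.smul (by positivity))
    (hD.posSemidef.smul ?_)) (h4.smul (by positivity))
  have : 0 ≤ 1 - η := by linarith
  positivity
end

section
/- Let A ∈ R^{m×n}, let Ω ∈ R^{n×r} be such that X = AΩ has rank r, and set Y = Aᵀ X (Xᵀ X)⁻¹ (the first modified ScaledGD step with η = 1 starting from X_0 = AΩ, Y_0 = 0). Let G ∈ R^{n×m} be the Moore–Penrose pseudoinverse of A, i.e., AGA = A, GAG = G, (AG)ᵀ = AG, and (GA)ᵀ = GA. Then Yᵀ G X = I_r; that is, generalized weak optimality for min_{X,Y} ‖XYᵀ − A‖_F² is attained in one iteration. -/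
open Matrix BigOperators

/-- One-step attainment of generalized weak optimality for asymmetric matrix
factorization: with `X = AΩ` of rank `r`, `Y = Aᵀ X (XᵀX)⁻¹` (the first modified
ScaledGD step with `η = 1`), and `G` the Moore–Penrose pseudoinverse of `A`,
one has `Yᵀ G X = I_r`. -/
theorem stmt_13
    (m n r : ℕ)
    (A : Matrix (Fin m) (Fin n) ℝ)
    (Ω : Matrix (Fin n) (Fin r) ℝ)
    (X : Matrix (Fin m) (Fin r) ℝ) (hX : X = A * Ω)
    (hXrank : X.rank = r)
    (Y : Matrix (Fin n) (Fin r) ℝ) (hY : Y = Aᵀ * X * (Xᵀ * X)⁻¹)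
    (G : Matrix (Fin n) (Fin m) ℝ)
    (hG1 : A * G * A = A)
    (hG2 : G * A * G = G)
    (hG3 : (A * G)ᵀ = A * G)
    (hG4 : (G * A)ᵀ = G * A) :
    Yᵀ * G * X = 1 := by
  have hr : (Xᵀ * X).rank = r := by rw [rank_transpose_mul_self, hXrank]
  have hu : IsUnit (Xᵀ * X) := by
    rw [← Matrix.mulVec_surjective_iff_isUnit]
    have h : LinearMap.range (Xᵀ * X).mulVecLin = ⊤ := by
      apply Submodule.eq_top_of_finrank_eq
      rw [Module.finrank_fin_fun]
      exact hr
    exact LinearMap.range_eq_top.mp h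
  have hAGX : A * (G * X) = X := by
    rw [hX, ← Matrix.mul_assoc, ← Matrix.mul_assoc, hG1]
  have hYt : Yᵀ = (Xᵀ * X)⁻¹ * (Xᵀ * A) := by
    rw [hY]
    simp [Matrix.transpose_mul, Matrix.transpose_nonsing_inv]
  rw [hYt, Matrix.mul_assoc, Matrix.mul_assoc, Matrix.mul_assoc, hAGX]
  exact Matrix.nonsing_inv_mul _ ((Matrix.isUnit_iff_isUnit_det _).mp hu)
end

section
/- Let A ∈ R^{m×n} have rank r_A, let r ≥ r_A (over-parametrization), and let Ω ∈ R^{n×r} be such that X = AΩ has rank r_A. Let P ∈ R^{r×r} be the Moore–Penrose pseudoinverse of XᵀX (i.e., (XᵀX)P(XᵀX) = XᵀX, P(XᵀX)P = P, and both (XᵀX)P and P(XᵀX) are symmetric), and set Y = Aᵀ X P (the first modified ScaledGD step with η = 1 and pseudoinverse preconditioner, starting from X_0 = AΩ, Y_0 = 0). Then X Yᵀ = A; i.e., global convergence is achieved in one step. -/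
open Matrix BigOperators

/-- One-step global convergence of modified ScaledGD (with pseudoinverse preconditioner)
under Nyström initialization in the asymmetric over-parametrized setting (`r ≥ r_A`):
with `X = AΩ` of rank `r_A`, `P = (XᵀX)†` and `Y = Aᵀ X P`, one has `XYᵀ = A`. -/
theorem stmt_15
    (m n rA r : ℕ) (hr : rA ≤ r)
    (A : Matrix (Fin m) (Fin n) ℝ) (hA : A.rank = rA)
    (Ω : Matrix (Fin n) (Fin r) ℝ)
    (X : Matrix (Fin m) (Fin r) ℝ) (hX : X = A * Ω)
    (hXrank : X.rank = rA)
    (P : Matrix (Fin r) (Fin r) ℝ)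
    (hP1 : (Xᵀ * X) * P * (Xᵀ * X) = Xᵀ * X)
    (hP2 : P * (Xᵀ * X) * P = P)
    (hP3 : ((Xᵀ * X) * P)ᵀ = (Xᵀ * X) * P)
    (hP4 : (P * (Xᵀ * X))ᵀ = P * (Xᵀ * X))
    (Y : Matrix (Fin n) (Fin r) ℝ) (hY : Y = Aᵀ * X * P) :
    X * Yᵀ = A := by
  have hG : (Xᵀ * X)ᵀ = Xᵀ * X := by simp [Matrix.transpose_mul]
  have h1 : (Xᵀ * X) * (Pᵀ * (Xᵀ * X)) = Xᵀ * X := by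
    have := congrArg Matrix.transpose hP1
    rw [Matrix.transpose_mul _ (Xᵀ * X), Matrix.transpose_mul _ P, hG] at this
    exact this
  have h2 : X * (Pᵀ * (Xᵀ * X) - 1) = 0 := by
    rw [← Matrix.conjTranspose_mul_self_mul_eq_zero, Matrix.conjTranspose_eq_transpose_of_trivial,
      Matrix.mul_sub, h1, Matrix.mul_one, sub_self]
  have h3 : X * (Pᵀ * (Xᵀ * X)) = X := by
    rw [Matrix.mul_sub, Matrix.mul_one] at h2
    exact sub_eq_zero.mp h2
  have hrange : LinearMap.range X.mulVecLin = LinearMap.range A.mulVecLin := by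
    apply Submodule.eq_of_le_of_finrank_eq
    · rw [hX, Matrix.mulVecLin_mul]
      exact LinearMap.range_comp_le_range _ _
    · exact hXrank.trans hA.symm
  apply Matrix.ext_iff_mulVec.mpr
  intro v
  have hv : A.mulVecLin v ∈ LinearMap.range X.mulVecLin := by
    rw [hrange]; exact LinearMap.mem_range_self _ v
  obtain ⟨w, hw⟩ := hv
  simp only [Matrix.mulVecLin_apply] at hw
  have h4 : X * Yᵀ = X * (Pᵀ * Xᵀ) * A := by
    rw [hY]; simp only [Matrix.transpose_mul, Matrix.transpose_transpose, Matrix.mul_assoc]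
  rw [h4, ← Matrix.mulVec_mulVec, ← hw, Matrix.mulVec_mulVec, Matrix.mul_assoc, Matrix.mul_assoc, h3]
end
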